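/- arXiv:1812.11086 — 8 statements merged into one kernel-verified Lean document; each statement's English description precedes it below -/
import Mathlib

section
/- Let A be a C*-algebra and I a closed two-sided ideal of A. Then there exists u ∈ A such that u·x = x and x·u = x for all x ∈ I if and only if there exists a closed two-sided ideal J of A such that x·y = 0 for all x ∈ I and y ∈ J and the quotient A/J is unital, i.e. there exists v ∈ A with v·a − a ∈ J and a·v − a ∈ J for all a ∈ A. -/
/-!
If `u` acts as a unit on `I`, take `J` to be the two-sided annihilator of `I`: it is a closed
two-sided ideal, and `u` is a unit modulo `J` because `x * (u * a - a) = (x * u - x) * a` and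
`(u * a - a) * x = u * (a * x) - a * x` both vanish for `x ∈ I`, and symmetrically for `a * u - a`.

Conversely, a unit `v` modulo `J` acts as a unit on `I`. On the right,
`(x * v - x) * a = x * (v * a - a) = 0` for every `a`, so `x * v = x`. On the left,
`z = v * x - x` lies in `I ∩ J`, so `z * star z * z = 0`, which forces `z = 0` by the C*-identity.
-/

/-- A closed two-sided ideal of a (possibly non-unital) C*-algebra, given as a set:
a topologically closed linear subspace absorbing multiplication on both sides. -/
structure IsClosedTwoSidedIdeal {A : Type*} [NonUnitalCStarAlgebra A] (I : Set A) : Prop where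
  isClosed : IsClosed I
  zero_mem : (0 : A) ∈ I
  add_mem : ∀ x y : A, x ∈ I → y ∈ I → x + y ∈ I
  smul_mem : ∀ (c : ℂ) (x : A), x ∈ I → c • x ∈ I
  mul_mem_left : ∀ a x : A, x ∈ I → a * x ∈ I
  mul_mem_right : ∀ a x : A, x ∈ I → x * a ∈ I

/-- For a closed two-sided ideal `I` of a C*-algebra `A`, there is `u ∈ A`
acting as a unit on `I` if and only if there is a closed two-sided ideal `J` with `I·J = 0`
and `A/J` unital. -/
theorem exists_local_unit_iff_exists_orthogonal_ideal_with_unital_quotient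
    {A : Type*} [NonUnitalCStarAlgebra A] {I : Set A} (hI : IsClosedTwoSidedIdeal I) :
    (∃ u : A, ∀ x ∈ I, u * x = x ∧ x * u = x) ↔
      ∃ J : Set A, IsClosedTwoSidedIdeal J ∧ (∀ x ∈ I, ∀ y ∈ J, x * y = 0) ∧
        ∃ v : A, ∀ a : A, v * a - a ∈ J ∧ a * v - a ∈ J := by
  constructor
  · rintro ⟨u, hu⟩
    refine ⟨{y | ∀ x ∈ I, x * y = 0 ∧ y * x = 0}, ⟨?_, ?_, ?_, ?_, ?_, ?_⟩, ?_, u, ?_⟩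
    · have hJ : {y : A | ∀ x ∈ I, x * y = 0 ∧ y * x = 0} =
          ⋂ x ∈ I, ({y : A | x * y = 0} ∩ {y : A | y * x = 0}) := by
        ext y
        simp
      rw [hJ]
      exact isClosed_biInter fun x _ =>
        (isClosed_eq (by fun_prop) continuous_const).inter
          (isClosed_eq (by fun_prop) continuous_const)
    · intro x _
      simp
    · intro y z hy hz x hx
      simp [mul_add, add_mul, hy x hx, hz x hx]
    · intro c y hy x hx
      exact ⟨by rw [mul_smul_comm, (hy x hx).1, smul_zero],
        by rw [smul_mul_assoc, (hy x hx).2, smul_zero]⟩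
    · intro a y hy x hx
      exact ⟨by rw [← mul_assoc, (hy _ (hI.mul_mem_right a x hx)).1],
        by rw [mul_assoc, (hy x hx).2, mul_zero]⟩
    · intro a y hy x hx
      exact ⟨by rw [← mul_assoc, (hy x hx).1, zero_mul],
        by rw [mul_assoc, (hy _ (hI.mul_mem_left a x hx)).2]⟩
    · exact fun x hx y hy => (hy x hx).1
    · intro a
      refine ⟨fun x hx => ⟨?_, ?_⟩, fun x hx => ⟨?_, ?_⟩⟩
      · rw [mul_sub, ← mul_assoc, (hu x hx).2, sub_self]
      · rw [sub_mul, mul_assoc, (hu _ (hI.mul_mem_left a x hx)).1, sub_self]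
      · rw [mul_sub, ← mul_assoc, (hu _ (hI.mul_mem_right a x hx)).2, sub_self]
      · rw [sub_mul, mul_assoc, (hu x hx).1, sub_self]
  · rintro ⟨J, hJ, hIJ, v, hv⟩
    refine ⟨v, fun x hx => ⟨?_, ?_⟩⟩
    · have hzI : v * x - x ∈ I := by
        have h := hI.add_mem _ _ (hI.mul_mem_left v x hx) (hI.smul_mem (-1) x hx)
        simpa [sub_eq_add_neg] using h
      have hz := hIJ _ hzI _ (hJ.mul_mem_left (star (v * x - x)) _ (hv x).1)
      rw [← sub_eq_zero]
      generalize v * x - x = z at hz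
      -- `star z * z` is self-adjoint with square `star z * (z * star z * z) = 0`.
      rw [← CStarRing.star_mul_self_eq_zero_iff, ← CStarRing.star_mul_self_eq_zero_iff,
        star_mul, star_star, mul_assoc, hz, mul_zero]
    · rw [← sub_eq_zero, ← CStarRing.mul_star_self_eq_zero_iff, sub_mul, mul_assoc, ← mul_sub]
      exact hIJ x hx _ (hv _).1
end

section
/- Let A be a C*-algebra with closed two-sided ideals I and J such that x·y = 0 for all x ∈ I and y ∈ J. If A/I is unital (there exists u ∈ A with u·a − a ∈ I and a·u − a ∈ I for all a ∈ A) and A/J is unital (there exists v ∈ A with v·a − a ∈ J and a·v − a ∈ J for all a ∈ A), then A is unital: there exists w ∈ A with w·a = a and a·w = a for all a ∈ A. -/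
namespace IsClosedTwoSidedIdeal

variable {A : Type*} [NonUnitalCStarAlgebra A] {I J : Set A}

lemma sub_mem (hI : IsClosedTwoSidedIdeal I) {x y : A} (hx : x ∈ I) (hy : y ∈ I) :
    x - y ∈ I := by
  have h := hI.add_mem x ((-1 : ℂ) • y) hx (hI.smul_mem _ _ hy)
  simpa [sub_eq_add_neg] using h

/-- Orthogonal ideals of a C*-algebra meet trivially. -/
lemma eq_zero_of_mem_of_mem (hI : IsClosedTwoSidedIdeal I) (hJ : IsClosedTwoSidedIdeal J)
    (horth : ∀ x ∈ I, ∀ y ∈ J, x * y = 0) {z : A} (hzI : z ∈ I) (hzJ : z ∈ J) : z = 0 := by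
  have h : star (z * star z) * (z * star z) = 0 := by
    rw [(IsSelfAdjoint.mul_star_self z).star_eq]
    exact horth _ (hI.mul_mem_right _ _ hzI) _ (hJ.mul_mem_right _ _ hzJ)
  exact CStarRing.mul_star_self_eq_zero_iff z |>.1 (CStarRing.star_mul_self_eq_zero_iff _ |>.1 h)

end IsClosedTwoSidedIdeal

/-- If `I, J` are closed two-sided ideals of a C*-algebra `A` with `I·J = 0`
and both `A/I` and `A/J` are unital, then `A` is unital. -/
theorem unital_of_orthogonal_ideals_with_unital_quotients
    {A : Type*} [NonUnitalCStarAlgebra A] {I J : Set A}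
    (hI : IsClosedTwoSidedIdeal I) (hJ : IsClosedTwoSidedIdeal J)
    (horth : ∀ x ∈ I, ∀ y ∈ J, x * y = 0)
    (hAmodI : ∃ u : A, ∀ a : A, u * a - a ∈ I ∧ a * u - a ∈ I)
    (hAmodJ : ∃ v : A, ∀ a : A, v * a - a ∈ J ∧ a * v - a ∈ J) :
    ∃ w : A, ∀ a : A, w * a = a ∧ a * w = a := by
  obtain ⟨u, hu⟩ := hAmodI
  obtain ⟨v, hv⟩ := hAmodJ
  refine ⟨u + v - u * v, fun a => ⟨?_, ?_⟩⟩
  · have hb := (hv a).1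
    have h := hI.eq_zero_of_mem_of_mem hJ horth (hu (v * a - a)).1
      (hJ.sub_mem (hJ.mul_mem_left u _ hb) hb)
    rw [← sub_eq_zero, ← neg_eq_zero, ← h]
    noncomm_ring
  · have hc := (hu a).2
    have h := hI.eq_zero_of_mem_of_mem hJ horth
      (hI.sub_mem (hI.mul_mem_right v _ hc) hc) (hv (a * u - a)).2
    rw [← sub_eq_zero, ← neg_eq_zero, ← h]
    noncomm_ring
end

section
/- Every infinite-dimensional C*-algebra A contains an infinite sequence {B_n}_{n∈ℕ} of mutually orthogonal nonzero hereditary C*-subalgebras: each B_n is a nonzero closed *-subalgebra of A that is hereditary, and x·y = 0 whenever x ∈ B_n, y ∈ B_m and n ≠ m. -/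
/-!
The hereditary subalgebras are obtained from a sequence `a n` of nonzero selfadjoint elements
with `a n * a m = 0` for `n ≠ m`: the double two-sided annihilator `{a n}⊥⊥` is a hereditary
C*-subalgebra containing `a n`, and `{a n}⊥⊥ * {a m}⊥⊥ = 0` since `a m ∈ {a n}⊥`.

Such a sequence exists in infinite dimension. Call a nonzero selfadjoint `a` an atom if `{a}⊥⊥`
does not contain two nonzero selfadjoint elements with product zero. If `{a}⊥⊥` contains no atom,
splitting repeatedly produces an orthogonal sequence (`exists_orthSeq_of_no_atom`). If `a` is an
atom, functional calculus shows that every selfadjoint `y ∈ {a}⊥⊥` satisfies `y * y = μ • y` for a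
real `μ` (two nonzero points of the quasispectrum would give two orthogonal functions of `y`), and
hence a multiple `p` of `a` is a projection with `p A p = ℂ p` (`exists_minProj_of_atom`). Take a
maximal orthogonal set of such minimal projections. If it is infinite it contains a sequence.
If it is finite, and `{a}⊥⊥` contains an atom for every nonzero selfadjoint `a`, its annihilator vanishes,
so its sum is a unit of `A`; as each `p A q` is at most one-dimensional, `A` is finite-dimensional
(`finiteDimensional_of_minProj`).
-/

/-- A hereditary C*-subalgebra of `A`, given as a set: a closed *-subalgebra `B` such that
`a ∈ A`, `b ∈ B` and `0 ≤ a ≤ b` imply `a ∈ B`. -/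
structure IsHereditarySubalgebra {A : Type*} [NonUnitalCStarAlgebra A]
    [PartialOrder A] [StarOrderedRing A] (B : Set A) : Prop where
  isClosed : IsClosed B
  zero_mem : (0 : A) ∈ B
  add_mem : ∀ x y : A, x ∈ B → y ∈ B → x + y ∈ B
  smul_mem : ∀ (c : ℂ) (x : A), x ∈ B → c • x ∈ B
  mul_mem : ∀ x y : A, x ∈ B → y ∈ B → x * y ∈ B
  star_mem : ∀ x : A, x ∈ B → star x ∈ B
  hereditary : ∀ a b : A, b ∈ B → 0 ≤ a → a ≤ b → a ∈ B

namespace OrthHereditary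

variable {A : Type*} [NonUnitalCStarAlgebra A]

/-- The two-sided annihilator `S⊥` of a set `S`. -/
def ann (S : Set A) : Set A := {x | ∀ s ∈ S, x * s = 0 ∧ s * x = 0}

/-- The double annihilator `{a}⊥⊥`; for selfadjoint `a` it is a hereditary C*-subalgebra
containing `a`. -/
def her (a : A) : Set A := ann (ann {a})

lemma mem_ann_singleton {a x : A} : x ∈ ann {a} ↔ x * a = 0 ∧ a * x = 0 := by
  simp [ann]

lemma self_mem_her (a : A) : a ∈ her a := fun _ hs =>
  ⟨(mem_ann_singleton.1 hs).2, (mem_ann_singleton.1 hs).1⟩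

lemma her_subset {a b : A} (h : b ∈ her a) : her b ⊆ her a := fun _ hx s hs =>
  hx s (mem_ann_singleton.2 ⟨(h s hs).2, (h s hs).1⟩)

lemma star_mem_ann {S : Set A} (hS : ∀ s ∈ S, star s ∈ S) {x : A} (hx : x ∈ ann S) :
    star x ∈ ann S := by
  intro s hs
  obtain ⟨h1, h2⟩ := hx _ (hS s hs)
  constructor
  · simpa using congrArg star h2
  · simpa using congrArg star h1

lemma isHereditarySubalgebra_ann [PartialOrder A] [StarOrderedRing A] {S : Set A}
    (hS : ∀ s ∈ S, star s ∈ S) : IsHereditarySubalgebra (ann S) where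
  isClosed := by
    have : ann S = ⋂ s ∈ S, ({x : A | x * s = 0} ∩ {x : A | s * x = 0}) := by
      ext x; simp [ann]
    rw [this]
    refine isClosed_biInter fun s _ => IsClosed.inter ?_ ?_
    · exact isClosed_eq (by fun_prop) continuous_const
    · exact isClosed_eq (by fun_prop) continuous_const
  zero_mem := fun s _ => by simp
  add_mem := fun x y hx hy s hs => by
    simp [add_mul, mul_add, (hx s hs).1, (hx s hs).2, (hy s hs).1, (hy s hs).2]
  smul_mem := fun c x hx s hs => by
    rw [smul_mul_assoc, mul_smul_comm, (hx s hs).1, (hx s hs).2]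
    simp
  mul_mem := fun x y hx hy s hs => by
    constructor
    · rw [mul_assoc, (hy s hs).1, mul_zero]
    · rw [← mul_assoc, (hx s hs).2, zero_mul]
  star_mem := fun x hx => star_mem_ann hS hx
  hereditary := by
    intro a b hb ha hab s hs
    obtain ⟨x, rfl⟩ := CStarAlgebra.nonneg_iff_eq_star_mul_self.1 ha
    -- Compressing `0 ≤ x⋆x ≤ b` by `t` with `b t = 0` gives `(x t)⋆(x t) = 0`.
    have key : ∀ t : A, b * t = 0 → x * t = 0 := by
      intro t ht
      have h1 := star_left_conjugate_le_conjugate hab t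
      rw [mul_assoc _ b, ht, mul_zero] at h1
      have h2 : star t * (star x * x) * t = star (x * t) * (x * t) := by
        simp [mul_assoc]
      rw [h2] at h1
      exact (CStarRing.star_mul_self_eq_zero_iff _).1
        (le_antisymm h1 (star_mul_self_nonneg _))
    have h1 := key s (hb s hs).1
    have h2 := congrArg star (key (star s) (hb _ (hS s hs)).1)
    simp only [star_mul, star_star, star_zero] at h2
    exact ⟨by rw [mul_assoc, h1, mul_zero], by rw [← mul_assoc, h2, zero_mul]⟩

lemma isHereditarySubalgebra_her [PartialOrder A] [StarOrderedRing A] {a : A}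
    (ha : IsSelfAdjoint a) : IsHereditarySubalgebra (her a) :=
  isHereditarySubalgebra_ann fun _ hs =>
    star_mem_ann (by simp [ha.star_eq]) hs

/-- An infinite orthogonal sequence of nonzero selfadjoint elements. -/
def OrthSeq (a : ℕ → A) : Prop :=
  (∀ n, IsSelfAdjoint (a n)) ∧ (∀ n, a n ≠ 0) ∧ ∀ n m, n ≠ m → a n * a m = 0

/-- A nonzero selfadjoint element whose double annihilator contains no two nonzero selfadjoint
elements with product zero. -/
def Atom (a : A) : Prop :=
  IsSelfAdjoint a ∧ a ≠ 0 ∧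
    ∀ b ∈ her a, ∀ c ∈ her a, IsSelfAdjoint b → IsSelfAdjoint c → b * c = 0 → b = 0 ∨ c = 0

/-- A nonzero projection `p` with `p A p = ℂ p`. -/
def MinProj (p : A) : Prop :=
  IsSelfAdjoint p ∧ p * p = p ∧ p ≠ 0 ∧ ∀ x, ∃ c : ℂ, p * x * p = c • p

lemma mul_comm_zero {b c : A} (hb : IsSelfAdjoint b) (hc : IsSelfAdjoint c) (h : b * c = 0) :
    c * b = 0 := by
  simpa [hb.star_eq, hc.star_eq] using congrArg star h

lemma exists_orthSeq_of_no_atom {a : A} (ha : IsSelfAdjoint a) (h0 : a ≠ 0)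
    (h : ∀ b ∈ her a, ¬ Atom b) : ∃ s : ℕ → A, OrthSeq s := by
  let T := {c : A // c ∈ her a ∧ IsSelfAdjoint c ∧ c ≠ 0}
  have step : ∀ c : T, ∃ d : T × T, d.1.1 ∈ her c.1 ∧ d.2.1 ∈ her c.1 ∧ d.1.1 * d.2.1 = 0 := by
    rintro ⟨c, hc, hsa, hne⟩
    have := h c hc
    simp only [Atom, not_and, not_forall, not_or] at this
    obtain ⟨x, hx, y, hy, hxs, hys, hxy, hx0, hy0⟩ := this hsa hne
    exact ⟨(⟨x, her_subset hc hx, hxs, hx0⟩, ⟨y, her_subset hc hy, hys, hy0⟩), hx, hy, hxy⟩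
  choose f hf1 hf2 hf3 using step
  -- `c n` is split as `c (n+1)` (to be split further) and `b n` (kept).
  let c : ℕ → T := fun n => Nat.rec ⟨a, self_mem_her a, ha, h0⟩ (fun _ t => (f t).2) n
  have hc : ∀ n, c (n + 1) = (f (c n)).2 := fun n => rfl
  let b : ℕ → T := fun n => (f (c n)).1
  have hmono : ∀ n m, n ≤ m → her (c m).1 ⊆ her (c n).1 := by
    intro n m hnm
    induction m, hnm using Nat.le_induction with
    | base => exact subset_rfl
    | succ m _ ih => exact (her_subset (by rw [hc]; exact hf2 _)).trans ih
  have hlt : ∀ n m, n < m → (b n).1 * (b m).1 = 0 := by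
    intro n m hnm
    have h1 : (b m).1 ∈ her (c (n + 1)).1 := hmono _ _ hnm (hf1 (c m))
    have h2 : (b n).1 * (c (n + 1)).1 = 0 := hf3 (c n)
    exact (h1 _ (mem_ann_singleton.2
      ⟨h2, mul_comm_zero (b n).2.2.1 (c (n + 1)).2.2.1 h2⟩)).2
  refine ⟨fun n => (b n).1, fun n => (b n).2.2.1, fun n => (b n).2.2.2, fun n m hnm => ?_⟩
  rcases lt_or_gt_of_ne hnm with h' | h'
  · exact hlt _ _ h'
  · exact mul_comm_zero (b m).2.2.1 (b n).2.2.1 (hlt _ _ h')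

/-- This holds because the quasispectrum of `y` has at most one nonzero point `μ`: bump functions
at two such points would give two nonzero orthogonal elements of `her a`. -/
lemma Atom.exists_mul_self_eq {a : A} (ha : Atom a) {y : A} (hy : y ∈ her a)
    (hys : IsSelfAdjoint y) : ∃ μ : ℝ, y * y = μ • y := by
  -- For `f t = h t * t` with `h 0 = 0`, `f(y) = h(y) y = y h(y)` inherits membership from `y`.
  have mem : ∀ h : ℝ → ℝ, Continuous h → h 0 = 0 → cfcₙ (fun t => h t * t) y ∈ her a := by
    intro h hc h0 s hs
    have e1 : cfcₙ (fun t => h t * t) y = cfcₙ h y * y := by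
      rw [cfcₙ_mul h (fun t => t) y hc.continuousOn h0 continuous_id.continuousOn rfl,
        cfcₙ_id' ℝ y]
    have e2 : cfcₙ (fun t => h t * t) y = y * cfcₙ h y := by
      simp_rw [mul_comm (h _)]
      rw [cfcₙ_mul (fun t => t) h y continuous_id.continuousOn rfl hc.continuousOn h0,
        cfcₙ_id' ℝ y]
    exact ⟨by rw [e1, mul_assoc, (hy s hs).1, mul_zero],
      by rw [e2, ← mul_assoc, (hy s hs).2, zero_mul]⟩
  have uniq : ∀ μ ∈ quasispectrum ℝ y, ∀ ν ∈ quasispectrum ℝ y, μ ≠ 0 → ν ≠ 0 → μ = ν := by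
    intro μ hμ ν hν hμ0 hν0
    by_contra hne
    obtain ⟨δ, hδ, h1, h2, h3⟩ : ∃ δ > 0, δ ≤ |μ| ∧ δ ≤ |ν| ∧ 2 * δ ≤ |μ - ν| := by
      have a1 := abs_pos.2 hμ0
      have a2 := abs_pos.2 hν0
      have a3 := abs_pos.2 (sub_ne_zero.2 hne)
      refine ⟨min (min |μ| |ν|) (|μ - ν| / 2), by positivity, ?_, ?_, ?_⟩
      · exact (min_le_left _ _).trans (min_le_left _ _)
      · exact (min_le_left _ _).trans (min_le_right _ _)
      · linarith [min_le_right (min |μ| |ν|) (|μ - ν| / 2)]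
    let tent : ℝ → ℝ → ℝ := fun ρ t => max 0 (δ - |t - ρ|)
    have tc : ∀ ρ, Continuous (tent ρ) := fun ρ => by fun_prop
    have t0 : ∀ ρ, δ ≤ |ρ| → tent ρ 0 = 0 := fun ρ h => by simp [tent, h]
    have tne : ∀ ρ ∈ quasispectrum ℝ y, ρ ≠ 0 → δ ≤ |ρ| →
        cfcₙ (fun t => tent ρ t * t) y ≠ 0 := by
      intro ρ hρ hρ0 hd hz
      rw [← cfcₙ_zero ℝ y] at hz
      have := eqOn_of_cfcₙ_eq_cfcₙ hz
        ((tc ρ).mul continuous_id).continuousOn (by simp) continuous_zero.continuousOn rfl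
        (ha := hys) hρ
      simp [tent, hρ0, not_le.2 hδ] at this
    have hprod : cfcₙ (fun t => tent μ t * t) y * cfcₙ (fun t => tent ν t * t) y = 0 := by
      rw [← cfcₙ_mul (fun t => tent μ t * t) (fun t => tent ν t * t) y ((tc μ).mul continuous_id).continuousOn (by simp)
        ((tc ν).mul continuous_id).continuousOn (by simp), ← cfcₙ_zero ℝ y]
      congr 1
      ext t
      have : tent μ t = 0 ∨ tent ν t = 0 := by
        simp only [tent, max_eq_left_iff]
        by_contra! hcon
        have := abs_sub_le μ t ν
        rw [abs_sub_comm μ t] at this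
        linarith [hcon.1, hcon.2]
      rcases this with h | h <;> simp [h]
    rcases ha.2.2 _ (mem _ (tc μ) (t0 μ h1)) _ (mem _ (tc ν) (t0 ν h2))
      (cfcₙ_predicate _ _) (cfcₙ_predicate _ _) hprod with h | h
    · exact tne μ hμ hμ0 h1 h
    · exact tne ν hν hν0 h2 h
  obtain ⟨μ, hμ⟩ : ∃ μ : ℝ, ∀ t ∈ quasispectrum ℝ y, t * t = μ * t := by
    by_cases h : ∃ μ ∈ quasispectrum ℝ y, μ ≠ 0
    · obtain ⟨μ, hμ, hμ0⟩ := h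
      refine ⟨μ, fun t ht => ?_⟩
      by_cases ht0 : t = 0
      · simp [ht0]
      · rw [uniq t ht μ hμ ht0 hμ0]
    · push Not at h
      exact ⟨0, fun t ht => by simp [h t ht]⟩
  refine ⟨μ, ?_⟩
  have e1 : cfcₙ (fun t : ℝ => t * t) y = y * y := by
    rw [cfcₙ_mul (fun t => t) (fun t => t) y continuous_id.continuousOn rfl
      continuous_id.continuousOn rfl, cfcₙ_id' ℝ y]
  have e2 : cfcₙ (fun t : ℝ => μ * t) y = μ • y := cfcₙ_const_mul_id μ y
  rw [← e1, ← e2]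
  exact cfcₙ_congr hμ

lemma exists_minProj_of_atom {a : A} (ha : Atom a) : ∃ p ∈ her a, MinProj p := by
  obtain ⟨μ, hμ⟩ := ha.exists_mul_self_eq (self_mem_her a) ha.1
  have hμ0 : μ ≠ 0 := by
    rintro rfl
    apply ha.2.1
    have h := hμ
    rw [zero_smul] at h
    nth_rewrite 1 [← ha.1.star_eq] at h
    exact (CStarRing.star_mul_self_eq_zero_iff _).1 h
  set p : A := μ⁻¹ • a with hp
  have hps : IsSelfAdjoint p := IsSelfAdjoint.smul (by simp [IsSelfAdjoint]) ha.1
  have hpp : p * p = p := by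
    rw [hp, smul_mul_smul_comm, hμ, smul_smul]
    congr 1
    field_simp
  have hp0 : p ≠ 0 := smul_ne_zero (inv_ne_zero hμ0) ha.2.1
  have hpm : p ∈ her a := fun s hs => by
    rw [hp, smul_mul_assoc, mul_smul_comm, (self_mem_her a s hs).1, (self_mem_her a s hs).2]
    simp
  clear_value p
  have hsa : ∀ x : A, IsSelfAdjoint x → ∃ c : ℝ, p * x * p = c • p := by
    intro x hx
    have hys : IsSelfAdjoint (p * x * p) := by
      simp [IsSelfAdjoint, hps.star_eq, hx.star_eq, mul_assoc]
    have hym : p * x * p ∈ her a := fun s hs =>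
      ⟨by rw [mul_assoc, (hpm s hs).1, mul_zero],
        by rw [mul_assoc, ← mul_assoc, (hpm s hs).2, zero_mul]⟩
    obtain ⟨c, hc⟩ := ha.exists_mul_self_eq hym hys
    -- `y = p x p` and `c p - y` are orthogonal, so one of them vanishes.
    have h1 : (p * x * p) * (c • p - p * x * p) = 0 := by
      rw [mul_sub, hc, mul_smul_comm, mul_assoc (p * x), hpp, sub_self]
    have h2 : c • p - p * x * p ∈ her a := fun s hs => by
      rw [sub_mul, mul_sub, smul_mul_assoc, mul_smul_comm, (hpm s hs).1, (hpm s hs).2,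
        (hym s hs).1, (hym s hs).2]
      simp
    have h3 : IsSelfAdjoint (c • p - p * x * p) :=
      (IsSelfAdjoint.smul (by simp [IsSelfAdjoint]) hps).sub hys
    rcases ha.2.2 _ hym _ h2 hys h3 h1 with h | h
    · exact ⟨0, by simpa using h⟩
    · exact ⟨c, (sub_eq_zero.1 h).symm⟩
  refine ⟨p, hpm, hps, hpp, hp0, fun x => ?_⟩
  obtain ⟨c, hc⟩ := hsa _ (realPart x).2
  obtain ⟨d, hd⟩ := hsa _ (imaginaryPart x).2
  refine ⟨c + Complex.I * d, ?_⟩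
  conv_lhs => rw [← realPart_add_I_smul_imaginaryPart x]
  rw [mul_add, add_mul, mul_smul_comm Complex.I, smul_mul_assoc Complex.I, hc, hd, add_smul,
    mul_smul]
  simp

/-- Each `p A q` with `p`, `q` minimal projections is at most one-dimensional. -/
lemma exists_generator {p q : A} (hp : MinProj p) (hq : MinProj q) :
    ∃ u : A, ∀ x, ∃ c : ℂ, p * x * q = c • u := by
  by_cases h : ∀ x, p * x * q = 0
  · exact ⟨0, fun x => ⟨0, by simp [h x]⟩⟩
  push Not at h
  obtain ⟨z, hz⟩ := h
  obtain ⟨l, hl⟩ := hq.2.2.2 (star z * p * z)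
  have hu : star (p * z * q) * (p * z * q) = l • q := by
    rw [← hl]
    simp only [star_mul, hp.1.star_eq, hq.1.star_eq, mul_assoc]
    rw [← mul_assoc p p, hp.2.1]
  have hl0 : l ≠ 0 := by
    rintro rfl
    rw [zero_smul] at hu
    exact hz ((CStarRing.star_mul_self_eq_zero_iff _).1 hu)
  refine ⟨p * z * q, fun x => ?_⟩
  obtain ⟨c, hc⟩ := hp.2.2.2 (x * q * star z)
  refine ⟨l⁻¹ * c, ?_⟩
  have h1 : l • (p * x * q) = c • (p * z * q) := by
    calc l • (p * x * q) = (p * x * q) * (l • q) := by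
          rw [mul_smul_comm, mul_assoc (p * x), hq.2.1]
      _ = (p * (x * q * star z) * p) * (p * z * q) := by
          rw [← hu]
          simp only [star_mul, hp.1.star_eq, hq.1.star_eq, mul_assoc]
          rw [← mul_assoc q q, hq.2.1]
      _ = c • (p * z * q) := by
          rw [hc, smul_mul_assoc, ← mul_assoc, ← mul_assoc, hp.2.1]
  rw [mul_smul, ← h1, inv_smul_smul₀ hl0]

/-- The sum of the projections in `F` is a unit of `A`, since the annihilator of `F` vanishes;
hence `A` is the sum of the finitely many subspaces `p A q` with `p, q ∈ F`. -/
lemma finiteDimensional_of_minProj (F : Finset A) (hF : ∀ p ∈ F, MinProj p)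
    (horth : (F : Set A).Pairwise fun p q => p * q = 0)
    (hmax : ∀ x ∈ ann (F : Set A), x = 0) : FiniteDimensional ℂ A := by
  set e : A := ∑ p ∈ F, p with he
  have hpe : ∀ p ∈ F, p * e = p := by
    intro p hp
    rw [he, Finset.mul_sum, Finset.sum_eq_single_of_mem p hp
      (fun q hq hqp => horth hp hq hqp.symm), (hF p hp).2.1]
  have hep : ∀ p ∈ F, e * p = p := by
    intro p hp
    rw [he, Finset.sum_mul, Finset.sum_eq_single_of_mem p hp
      (fun q hq hqp => horth hq hp hqp), (hF p hp).2.1]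
  have hes : star e = e := by
    rw [he, star_sum]
    exact Finset.sum_congr rfl fun p hp => (hF p hp).1.star_eq
  -- The compression of `A` by `1 - e` annihilates `F`.
  have hcomp : ∀ a : A, a - e * a - a * e + e * a * e = 0 := by
    intro a
    apply hmax
    intro p hp
    have h1 := hpe p hp
    have h2 := hep p hp
    constructor
    · simp only [add_mul, sub_mul, mul_assoc, h2]
      abel
    · simp only [mul_add, mul_sub, ← mul_assoc, h1]
      abel
  have hleft : ∀ a : A, e * a = a := by
    intro a
    have h : star (star a - star a * e) * (star a - star a * e) = 0 := by
      rw [← hcomp (a * star a)]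
      simp only [star_sub, star_mul, star_star, hes, sub_mul, mul_sub, mul_assoc]
      abel
    have h' := congrArg star ((CStarRing.star_mul_self_eq_zero_iff _).1 h)
    simp only [star_sub, star_mul, star_star, hes, star_zero] at h'
    exact (sub_eq_zero.1 h').symm
  have hright : ∀ a : A, a * e = a := by
    intro a
    have := congrArg star (hleft (star a))
    simpa [hes] using this
  have hgen : ∀ i : F × F, ∃ u : A, ∀ x, ∃ c : ℂ, i.1.1 * x * i.2.1 = c • u :=
    fun i => exists_generator (hF _ i.1.2) (hF _ i.2.2)
  choose u hu using hgen
  refine Module.Finite.of_fg_top ?_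
  rw [show (⊤ : Submodule ℂ A) = Submodule.span ℂ (Set.range u) from ?_]
  · exact Submodule.fg_span (Set.finite_range u)
  · symm
    rw [eq_top_iff]
    intro a _
    have : a = ∑ p ∈ F, ∑ q ∈ F, p * a * q := by
      have h1 : ∀ p ∈ F, ∑ q ∈ F, p * a * q = p * a := fun p _ => by
        rw [← Finset.mul_sum, ← he, hright]
      rw [Finset.sum_congr rfl h1, ← Finset.sum_mul, ← he, hleft]
    rw [this]
    refine Submodule.sum_mem _ fun p hp => Submodule.sum_mem _ fun q hq => ?_
    obtain ⟨c, hc⟩ := hu (⟨p, hp⟩, ⟨q, hq⟩) a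
    rw [show p * a * q = _ from hc]
    exact Submodule.smul_mem _ _ (Submodule.subset_span ⟨_, rfl⟩)

lemma exists_orthSeq (hA : ¬ FiniteDimensional ℂ A) : ∃ s : ℕ → A, OrthSeq s := by
  by_contra hno
  have hatom : ∀ a : A, IsSelfAdjoint a → a ≠ 0 → ∃ p ∈ her a, MinProj p := by
    intro a ha h0
    by_contra hcon
    refine hno (exists_orthSeq_of_no_atom ha h0 fun b hb hbat => hcon ?_)
    obtain ⟨p, hp, hpm⟩ := exists_minProj_of_atom hbat
    exact ⟨p, her_subset hb hp, hpm⟩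
  obtain ⟨S, hS⟩ := zorn_subset
    {S : Set A | (∀ p ∈ S, MinProj p) ∧ S.Pairwise fun p q => p * q = 0} (by
      intro c hc hchain
      refine ⟨⋃₀ c, ⟨?_, ?_⟩, fun s hs => Set.subset_sUnion_of_mem hs⟩
      · rintro p ⟨s, hs, hps⟩
        exact (hc hs).1 p hps
      · exact (Set.pairwise_sUnion hchain.directedOn).2 fun s hs => (hc hs).2)
  obtain ⟨hSm, hSo⟩ := hS.prop
  have hfin : S.Finite := by
    by_contra hinf
    let f := Set.Infinite.natEmbedding S hinf
    exact hno ⟨fun n => (f n).1, fun n => (hSm _ (f n).2).1, fun n => (hSm _ (f n).2).2.2.1,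
      fun n m hnm => hSo (f n).2 (f m).2 fun h => hnm (f.injective (Subtype.ext h))⟩
  refine hA (finiteDimensional_of_minProj hfin.toFinset (by simpa using hSm) (by simpa using hSo) ?_)
  intro x hx
  rw [Set.Finite.coe_toFinset] at hx
  by_contra hx0
  have hy0 : star x * x ≠ 0 := fun h => hx0 ((CStarRing.star_mul_self_eq_zero_iff _).1 h)
  obtain ⟨p, hp, hpm⟩ := hatom _ (IsSelfAdjoint.star_mul_self x) hy0
  have hps : ∀ q ∈ S, p * q = 0 ∧ q * p = 0 := by
    intro q hq
    apply hp q
    have h1 := (hx q hq).1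
    have h2 : q * star x = 0 := by
      simpa [(hSm q hq).1.star_eq] using congrArg star h1
    exact mem_ann_singleton.2 ⟨by rw [← mul_assoc, h2, zero_mul], by rw [mul_assoc, h1, mul_zero]⟩
  have hpS : p ∈ S := by
    refine hS.le_of_ge (y := insert p S) ⟨?_, ?_⟩ (Set.subset_insert p S) (Set.mem_insert p S)
    · rintro q (rfl | hq)
      · exact hpm
      · exact hSm q hq
    · exact (Set.pairwise_insert).2 ⟨hSo, fun q hq _ => hps q hq⟩
  exact hpm.2.2.1 (by rw [← hpm.2.1]; exact (hps p hpS).1)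

end OrthHereditary

open OrthHereditary in
/-- Every infinite-dimensional C*-algebra contains an infinite sequence of
mutually orthogonal nonzero hereditary C*-subalgebras. -/
theorem exists_orthogonal_sequence_of_hereditary_subalgebras
    {A : Type*} [NonUnitalCStarAlgebra A] [PartialOrder A] [StarOrderedRing A]
    (hA : ¬ FiniteDimensional ℂ A) :
    ∃ B : ℕ → Set A, (∀ n, IsHereditarySubalgebra (B n)) ∧ (∀ n, B n ≠ {0}) ∧
      ∀ n m : ℕ, n ≠ m → ∀ x ∈ B n, ∀ y ∈ B m, x * y = 0 := by
  obtain ⟨a, hsa, h0, horth⟩ := exists_orthSeq hA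
  refine ⟨fun n => her (a n), fun n => isHereditarySubalgebra_her (hsa n), fun n h => ?_,
    fun n m hnm x hx y hy => ?_⟩
  · have : a n ∈ ({0} : Set A) := h ▸ self_mem_her (a n)
    exact h0 n this
  · have hx' : x ∈ ann {a m} :=
      mem_ann_singleton.2 (hx (a m) (mem_ann_singleton.2 ⟨horth m n hnm.symm, horth n m hnm⟩))
    exact (hy x hx').2
end

section
/- If a C*-algebra A is locally unital, then QM(A) = M(A): every quasi-centralizer of A comes from a multiplier. (No σ-unitality assumption is needed.) -/
/-- A quasi-centralizer of `A`: a continuous bilinear map `m : A × A → A` satisfying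
`m (a*x) (y*b) = a * m x y * b` for all `a x y b`. -/
def IsQuasiCentralizer {A : Type*} [NonUnitalNormedRing A] [NormedSpace ℂ A]
    (m : A →L[ℂ] A →L[ℂ] A) : Prop :=
  ∀ a x y b : A, m (a * x) (y * b) = a * m x y * b

/-- The quasi-centralizer `m` comes from a multiplier, i.e. there is a double centralizer
`(L, R)` of `A` with `m x y = x * L y`. -/
def ComesFromMultiplier {A : Type*} [NonUnitalNormedRing A] [NormedSpace ℂ A]
    (m : A →L[ℂ] A →L[ℂ] A) : Prop :=
  ∃ L R : A →L[ℂ] A, (∀ x y : A, R x * y = x * L y) ∧ ∀ x y : A, m x y = x * L y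

/-- `QM(A) = M(A)`: every quasi-centralizer of `A` comes from a multiplier. -/
def QMeqM (A : Type*) [NonUnitalNormedRing A] [NormedSpace ℂ A] : Prop :=
  ∀ m : A →L[ℂ] A →L[ℂ] A, IsQuasiCentralizer m → ComesFromMultiplier m

/-- The C*-algebra `A` is locally unital: there is a family of closed two-sided ideals
whose sum is dense in `A`, each possessing a local unit. -/
def IsLocallyUnital (A : Type*) [NonUnitalCStarAlgebra A] : Prop :=
  ∃ (ι : Type) (I : ι → Set A),
    (∀ j, IsClosedTwoSidedIdeal (I j)) ∧
    Dense (Submodule.span ℂ (⋃ j, I j) : Set A) ∧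
    ∀ j, ∃ u : A, ∀ x ∈ I j, u * x = x ∧ x * u = x

open Filter Topology

/-- Every `y` in a C⋆-algebra lies in the closed right ideal generated by `y * (star y * y)`. -/
lemma mem_closure_mul_star_mul_self {A : Type*} [NonUnitalCStarAlgebra A] (y : A) :
    y ∈ closure (Set.range fun c : A => y * (star y * y * c)) := by
  rw [Metric.mem_closure_range_iff]
  intro ε hε
  set b : A := star y * y with hb
  have hbs : IsSelfAdjoint b := IsSelfAdjoint.star_mul_self y
  set δ : ℝ := ε ^ 2 with hδ
  have hδ0 : 0 < δ := by positivity
  have hne : ∀ t : ℝ, t ^ 2 + δ ^ 2 ≠ 0 := fun t => by positivity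
  -- `t * h t = t ^ 2 / (t ^ 2 + δ ^ 2)` is close to `1` away from `0`, and `h 0 = 0`.
  let h : ℝ → ℝ := fun t => t / (t ^ 2 + δ ^ 2)
  have hc : Continuous h := by
    dsimp only [h]
    exact continuous_id.div (by fun_prop) hne
  have h0 : h 0 = 0 := by simp [h]
  refine ⟨cfcₙ h b, ?_⟩
  set k : A := cfcₙ h b with hk
  let f : ℝ → ℝ := fun t => t * h t
  have hfc : Continuous f := continuous_id.mul hc
  have hf0 : f 0 = 0 := zero_mul _
  let q : ℝ → ℝ := fun t => t - t * f t
  have hqc : Continuous q := continuous_id.sub (continuous_id.mul hfc)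
  have hq0 : q 0 = 0 := by simp [q]
  have e1 : cfcₙ (fun t : ℝ => t) b = b := cfcₙ_id' ℝ b
  have ef : cfcₙ f b = b * k := by
    have := cfcₙ_mul (fun t : ℝ => t) h b continuousOn_id rfl hc.continuousOn h0
    rwa [e1] at this
  have eq1 : cfcₙ (fun t : ℝ => t * f t) b = b * (b * k) := by
    have := cfcₙ_mul (fun t : ℝ => t) f b continuousOn_id rfl hfc.continuousOn hf0
    rwa [e1, ef] at this
  have eq : cfcₙ q b = b - b * (b * k) := by
    have := cfcₙ_sub (fun t : ℝ => t) (fun t : ℝ => t * f t) b continuousOn_id rfl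
      (continuous_id.mul hfc).continuousOn (zero_mul _)
    rwa [e1, eq1] at this
  have efs : star (b * k) = b * k := by
    rw [← ef]
    exact (IsSelfAdjoint.cfcₙ (f := f) (a := b)).star_eq
  have key : star (y - y * (b * k)) * (y - y * (b * k)) = cfcₙ (fun t => q t - f t * q t) b := by
    rw [cfcₙ_sub q (fun t => f t * q t) b hqc.continuousOn hq0 (hfc.mul hqc).continuousOn
      (by simp [hf0]), cfcₙ_mul f q b hfc.continuousOn hf0 hqc.continuousOn hq0, eq, ef,
      star_sub, star_mul, efs]
    simp only [hb, sub_mul, mul_sub, mul_assoc]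
    abel
  have hle : ‖y - y * (b * k)‖ * ‖y - y * (b * k)‖ ≤ δ / 2 := by
    rw [← CStarRing.norm_star_mul_self, key]
    refine norm_cfcₙ_le fun t _ => ?_
    have e : q t - f t * q t = t * δ ^ 4 / (t ^ 2 + δ ^ 2) ^ 2 := by
      have := hne t
      dsimp only [q, f, h]
      field_simp
      ring
    rw [e, Real.norm_eq_abs, abs_div, abs_mul, abs_of_pos (by positivity : 0 < δ ^ 4),
      abs_of_pos (by positivity : 0 < (t ^ 2 + δ ^ 2) ^ 2), div_le_iff₀ (by positivity)]
    have h1 : 2 * |t| * δ ≤ t ^ 2 + δ ^ 2 := by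
      nlinarith [sq_nonneg (|t| - δ), sq_abs t]
    have h2 : δ ^ 2 * (t ^ 2 + δ ^ 2) ≤ (t ^ 2 + δ ^ 2) ^ 2 := by
      rw [sq (t ^ 2 + δ ^ 2)]
      gcongr
      exact le_add_of_nonneg_left (sq_nonneg t)
    calc |t| * δ ^ 4 = δ ^ 3 / 2 * (2 * |t| * δ) := by ring
      _ ≤ δ ^ 3 / 2 * (t ^ 2 + δ ^ 2) := by gcongr
      _ = δ / 2 * (δ ^ 2 * (t ^ 2 + δ ^ 2)) := by ring
      _ ≤ δ / 2 * (t ^ 2 + δ ^ 2) ^ 2 := by gcongr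
  rw [dist_eq_norm]
  by_contra! hcon
  nlinarith [mul_self_le_mul_self hε.le hcon]

/-- A continuous right module map `F` whose values on a two-sided ideal `S` are annihilated by
`S` from the left vanishes on `S`. -/
lemma eq_zero_of_annihilated {A : Type*} [NonUnitalCStarAlgebra A] {S : Set A}
    (hl : ∀ a x : A, x ∈ S → a * x ∈ S) (hr : ∀ a x : A, x ∈ S → x * a ∈ S)
    {F : A → A} (hF : Continuous F) (hmul : ∀ y b : A, F (y * b) = F y * b)
    (hann : ∀ a ∈ S, ∀ y ∈ S, a * F y = 0) {y : A} (hy : y ∈ S) : F y = 0 := by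
  have h1 : F y * (star y * y) = 0 := by
    rw [← CStarRing.star_mul_self_eq_zero_iff]
    have := hann (star y * y * star (F y)) (hr _ _ (hl _ _ hy)) y hy
    calc star (F y * (star y * y)) * (F y * (star y * y))
        = (star y * y * star (F y) * F y) * (star y * y) := by simp [mul_assoc]
      _ = 0 := by rw [this, zero_mul]
  have hcl : IsClosed {z | F z = 0} := isClosed_eq hF continuous_const
  refine closure_minimal ?_ hcl (mem_closure_mul_star_mul_self y)
  rintro _ ⟨c, rfl⟩
  change F _ = 0
  rw [hmul, ← mul_assoc, h1, zero_mul]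

lemma exists_isApproximateUnit (A : Type*) [NonUnitalCStarAlgebra A] :
    ∃ l : Filter A, l.IsApproximateUnit := by
  let _ := CStarAlgebra.spectralOrder A
  let _ := CStarAlgebra.spectralOrderedRing A
  exact ⟨_, (CStarAlgebra.increasingApproximateUnit A).toIsApproximateUnit⟩

namespace IsQuasiCentralizer

variable {A : Type*} [NonUnitalCStarAlgebra A] {m : A →L[ℂ] A →L[ℂ] A}

lemma map_mul_left (hm : IsQuasiCentralizer m) (a x y : A) : m (a * x) y = a * m x y := by
  obtain ⟨l, hl⟩ := exists_isApproximateUnit A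
  have := hl.neBot
  have h1 : Tendsto (fun e => m (a * x) (y * e)) l (𝓝 (m (a * x) y)) :=
    ((m (a * x)).continuous.tendsto y).comp (hl.tendsto_mul_left y)
  simp only [hm a x y] at h1
  exact tendsto_nhds_unique h1 (hl.tendsto_mul_left (a * m x y))

lemma map_mul_right (hm : IsQuasiCentralizer m) (x y b : A) : m x (y * b) = m x y * b := by
  obtain ⟨l, hl⟩ := exists_isApproximateUnit A
  have := hl.neBot
  have h1 : Tendsto (fun e => m.flip (y * b) (e * x)) l (𝓝 (m.flip (y * b) x)) :=
    ((m.flip (y * b)).continuous.tendsto x).comp (hl.tendsto_mul_right x)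
  simp only [ContinuousLinearMap.flip_apply, hm _ x y b, mul_assoc] at h1
  exact tendsto_nhds_unique h1 (hl.tendsto_mul_right (m x y * b))

lemma eq_mul_of_mem_right (hm : IsQuasiCentralizer m) {I : Set A} (hI : IsClosedTwoSidedIdeal I)
    {u : A} (hu : ∀ x ∈ I, u * x = x ∧ x * u = x) (x : A) {y : A} (hy : y ∈ I) :
    m x y = x * m u y := by
  have h : m (x - x * u) y = 0 := by
    refine eq_zero_of_annihilated hI.mul_mem_left hI.mul_mem_right
      (m (x - x * u)).continuous (hm.map_mul_right _) (fun a ha z _ => ?_) hy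
    rw [← hm.map_mul_left, mul_sub, ← mul_assoc, (hu _ (hI.mul_mem_right x a ha)).2, sub_self]
    simp
  rw [← hm.map_mul_left, ← sub_eq_zero, ← h]
  simp

lemma eq_mul_of_mem_left (hm : IsQuasiCentralizer m) {I : Set A} (hI : IsClosedTwoSidedIdeal I)
    {u : A} (hu : ∀ x ∈ I, u * x = x ∧ x * u = x) {x : A} (hx : x ∈ I) (y : A) :
    m x y = m x u * y := by
  have h : star (m (star (star x)) (y - u * y)) = 0 := by
    refine eq_zero_of_annihilated (S := {z | star z ∈ I})
      (F := fun z => star (m (star z) (y - u * y))) (fun a z hz => ?_) (fun a z hz => ?_)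
      ?_ (fun z b => ?_) (fun a ha z _ => ?_) (y := star x) (by simpa using hx)
    · simpa using hI.mul_mem_right (star a) _ hz
    · simpa using hI.mul_mem_left (star a) _ hz
    · exact continuous_star.comp ((m.flip (y - u * y)).continuous.comp continuous_star)
    · simp only [star_mul, hm.map_mul_left, star_star]
    · rw [← star_star a, ← star_mul, ← hm.map_mul_right, sub_mul, mul_assoc,
        (hu _ (hI.mul_mem_left y _ ha)).1, sub_self]
      simp
  rw [star_star, star_eq_zero] at h
  rw [← hm.map_mul_right, ← sub_eq_zero, ← h]
  simp

end IsQuasiCentralizer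

/-- If `f` is isometric, then `g` factors through `f` as soon as `g` maps a set with dense span
into the (automatically closed) range of `f`. -/
lemma exists_lift_of_isometry {E G : Type*} [NormedAddCommGroup E] [NormedSpace ℂ E]
    [CompleteSpace E] [NormedAddCommGroup G] [NormedSpace ℂ G] [CompleteSpace G]
    (f g : E →L[ℂ] G) (hf : Isometry f) {s : Set E}
    (hs : Dense (Submodule.span ℂ s : Set E)) (h : ∀ y ∈ s, ∃ v, f v = g y) :
    ∃ L : E →L[ℂ] E, ∀ y, f (L y) = g y := by
  have hcl : IsClosed (Set.range f) := hf.isClosedEmbedding.isClosed_range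
  have hmem : ∀ y, g y ∈ f.range := by
    intro y
    have hle : Submodule.span ℂ s ≤ f.range.comap (g : E →ₗ[ℂ] G) :=
      Submodule.span_le.2 fun z hz => h z hz
    have hcl' : IsClosed {z | g z ∈ Set.range f} := hcl.preimage g.continuous
    exact closure_minimal (fun z hz => hle hz) hcl' (hs y)
  let e := f.equivRange hf.injective hcl
  refine ⟨(e.symm : f.range →L[ℂ] E).comp (g.codRestrict f.range hmem), fun y => ?_⟩
  exact congrArg Subtype.val (e.apply_symm_apply ⟨g y, hmem y⟩)

/-- If a C*-algebra `A` is locally unital, then `QM(A) = M(A)`. -/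
theorem QMeqM_of_isLocallyUnital
    {A : Type*} [NonUnitalCStarAlgebra A] (hA : IsLocallyUnital A) :
    QMeqM A := by
  obtain ⟨ι, I, hI, hd, hu⟩ := hA
  intro m hm
  obtain ⟨L, hL⟩ := exists_lift_of_isometry (ContinuousLinearMap.mul ℂ A).flip m.flip
    (ContinuousLinearMap.isometry_mul_flip ℂ A) hd (by
      intro y hy
      obtain ⟨j, hj⟩ := Set.mem_iUnion.1 hy
      obtain ⟨u, hu⟩ := hu j
      exact ⟨m u y, ContinuousLinearMap.ext fun x =>
        (hm.eq_mul_of_mem_right (hI j) hu x hj).symm⟩)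
  obtain ⟨R, hR⟩ := exists_lift_of_isometry (ContinuousLinearMap.mul ℂ A) m
    (ContinuousLinearMap.isometry_mul ℂ A) hd (by
      intro x hx
      obtain ⟨j, hj⟩ := Set.mem_iUnion.1 hx
      obtain ⟨u, hu⟩ := hu j
      exact ⟨m x u, ContinuousLinearMap.ext fun y =>
        (hm.eq_mul_of_mem_left (hI j) hu hj y).symm⟩)
  have hL' : ∀ x y, x * L y = m x y := fun x y => DFunLike.congr_fun (hL y) x
  have hR' : ∀ x y, R x * y = m x y := fun x y => DFunLike.congr_fun (hR x) y
  exact ⟨L, R, fun x y => (hR' x y).trans (hL' x y).symm, fun x y => (hL' x y).symm⟩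
end

section
/- Let H be a complex Hilbert space and let A be a closed *-subalgebra of the bounded operators on H all of whose elements are compact operators. Then QM(A) = M(A): every quasi-centralizer of A comes from a multiplier. -/
open Filter Topology ComplexConjugate

/-- A form of the compactness of bounded sets of operators in the weak operator
topology: a bounded family of operators converges weakly along an ultrafilter. -/
lemma exists_weak_limit {ι H : Type*} [NormedAddCommGroup H] [InnerProductSpace ℂ H]
    [CompleteSpace H] (u : Ultrafilter ι) (F : ι → H →L[ℂ] H) (C : ℝ)
    (hF : ∀ᶠ i in (u : Filter ι), ‖F i‖ ≤ C) :
    ∃ T : H →L[ℂ] H, ∀ ξ η, Tendsto (fun i => inner ℂ (F i ξ) η) u (𝓝 (inner ℂ (T ξ) η)) := by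
  have hb : ∀ ξ η, ∀ᶠ i in (u : Filter ι), ‖inner ℂ (F i ξ) η‖ ≤ C * ‖ξ‖ * ‖η‖ := by
    intro ξ η
    filter_upwards [hF] with i hi
    calc ‖inner ℂ (F i ξ) η‖ ≤ ‖F i ξ‖ * ‖η‖ := norm_inner_le_norm _ _
      _ ≤ C * ‖ξ‖ * ‖η‖ := by
        gcongr
        exact (F i).le_of_opNorm_le hi ξ
  have hlim : ∀ ξ η, ∃ c : ℂ, Tendsto (fun i => inner ℂ (F i ξ) η) u (𝓝 c) := by
    intro ξ η
    obtain ⟨c, -, hc⟩ := (isCompact_closedBall (0 : ℂ) (C * ‖ξ‖ * ‖η‖)).ultrafilter_le_nhds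
      (u.map fun i => inner ℂ (F i ξ) η) (by
        rw [le_principal_iff]
        exact mem_map.2 ((hb ξ η).mono fun i hi => by simpa using hi))
    exact ⟨c, hc⟩
  choose B hB using hlim
  let B₀ : H →ₗ⋆[ℂ] H →ₗ[ℂ] ℂ := LinearMap.mk₂'ₛₗ (starRingEnd ℂ) (RingHom.id ℂ) B
    (fun ξ ξ' η => tendsto_nhds_unique (hB _ _)
      (((hB ξ η).add (hB ξ' η)).congr fun i => by simp))
    (fun c ξ η => tendsto_nhds_unique (hB _ _)
      (((hB ξ η).const_mul (conj c)).congr fun i => by simp [mul_comm]))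
    (fun ξ η η' => tendsto_nhds_unique (hB _ _)
      (((hB ξ η).add (hB ξ η')).congr fun i => by simp))
    (fun c ξ η => tendsto_nhds_unique (hB _ _)
      (((hB ξ η).const_mul c).congr fun i => by simp))
  let B₁ : H →L⋆[ℂ] H →L[ℂ] ℂ := B₀.mkContinuous₂ C fun ξ η =>
    le_of_tendsto (hB ξ η).norm (hb ξ η)
  refine ⟨InnerProductSpace.continuousLinearMapOfBilin B₁, fun ξ η => ?_⟩
  rw [InnerProductSpace.continuousLinearMapOfBilin_apply]
  exact hB ξ η

/-- Contractions that converge to the identity weakly at a vector converge strongly there. -/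
lemma tendsto_of_weak_of_contraction {ι H : Type*} [NormedAddCommGroup H] [InnerProductSpace ℂ H]
    (l : Filter ι) (E : ι → H →L[ℂ] H) (hE : ∀ᶠ i in l, ‖E i‖ ≤ 1) (ζ : H)
    (h : Tendsto (fun i => inner ℂ (E i ζ) ζ) l (𝓝 (inner ℂ ζ ζ))) :
    Tendsto (fun i => E i ζ) l (𝓝 ζ) := by
  rw [tendsto_iff_norm_sub_tendsto_zero]
  have h1 : Tendsto (fun i => 2 * ‖ζ‖ ^ 2 - 2 * RCLike.re (inner ℂ (E i ζ) ζ)) l (𝓝 0) := by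
    have := ((RCLike.continuous_re.tendsto _).comp h).const_mul 2 |>.const_sub (2 * ‖ζ‖ ^ 2)
    rw [inner_self_eq_norm_sq, sub_self] at this
    exact this
  have h2 : Tendsto (fun i => ‖E i ζ - ζ‖ ^ 2) l (𝓝 0) := by
    refine squeeze_zero' (.of_forall fun i => by positivity) ?_ h1
    filter_upwards [hE] with i hi
    have h3 : ‖E i ζ‖ ≤ ‖ζ‖ := by simpa using (E i).le_of_opNorm_le hi ζ
    have h4 : ‖E i ζ‖ ^ 2 ≤ ‖ζ‖ ^ 2 := by gcongr
    rw [norm_sub_sq (𝕜 := ℂ)]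
    linarith
  simpa using h2.sqrt

/-- Contractions converging strongly to the identity on the range of a compact operator `K`
converge to it uniformly on the image of the unit ball. -/
lemma tendsto_mul_of_compact {ι H : Type*} [NormedAddCommGroup H] [InnerProductSpace ℂ H]
    (l : Filter ι) (E : ι → H →L[ℂ] H) (hE : ∀ᶠ i in l, ‖E i‖ ≤ 1) (K : H →L[ℂ] H)
    (hK : IsCompactOperator K) (h : ∀ ξ, Tendsto (fun i => E i (K ξ)) l (𝓝 (K ξ))) :
    Tendsto (fun i => E i * K) l (𝓝 K) := by
  have htb : TotallyBounded (K '' Metric.closedBall 0 1) := by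
    have := IsCompactOperator.isCompact_closure_image_closedBall (f := K.toLinearMap) hK 1
    exact this.totallyBounded.subset subset_closure
  rw [Metric.tendsto_nhds]
  intro ε hε
  obtain ⟨t, hts, htf, hcov⟩ := Metric.finite_approx_of_totallyBounded htb (ε / 4) (by positivity)
  have hfin : ∀ᶠ i in l, ∀ ζ ∈ t, ‖E i ζ - ζ‖ < ε / 4 := by
    rw [htf.eventually_all]
    intro ζ hζ
    obtain ⟨ξ, -, rfl⟩ := hts hζ
    have := Metric.tendsto_nhds.1 (h ξ) (ε / 4) (by positivity)
    simpa [dist_eq_norm] using this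
  filter_upwards [hfin, hE] with i hi hEi
  rw [dist_eq_norm]
  refine lt_of_le_of_lt (ContinuousLinearMap.opNorm_le_of_unit_norm (C := 3 * (ε / 4))
    (by positivity) fun ξ hξ => ?_) (by linarith)
  obtain ⟨ζ, hζ, hd⟩ := Set.mem_iUnion₂.1 (hcov ⟨ξ, by simp [hξ], rfl⟩)
  rw [Metric.mem_ball, dist_eq_norm] at hd
  have h1 : ‖E i (K ξ - ζ)‖ ≤ ‖K ξ - ζ‖ := by simpa using (E i).le_of_opNorm_le hEi (K ξ - ζ)
  have h2 : (E i * K - K) ξ = E i (K ξ - ζ) + (E i ζ - ζ) - (K ξ - ζ) := by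
    simp
  have h3 := hi ζ hζ
  rw [h2]
  calc _ ≤ ‖E i (K ξ - ζ) + (E i ζ - ζ)‖ + ‖K ξ - ζ‖ := norm_sub_le _ _
    _ ≤ ‖E i (K ξ - ζ)‖ + ‖E i ζ - ζ‖ + ‖K ξ - ζ‖ := by gcongr; exact norm_add_le _ _
    _ ≤ _ := by linarith

/-- A C⋆-algebra has a right approximate unit of contractions, taken here as an ultrafilter so
that bounded families have limits along it. -/
lemma exists_ultrafilter_approximateUnit (A : Type*) [NonUnitalCStarAlgebra A] :
    ∃ u : Ultrafilter A, (∀ x : A, Tendsto (x * ·) u (𝓝 x)) ∧ ∀ᶠ e in (u : Filter A), ‖e‖ ≤ 1 := by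
  let := CStarAlgebra.spectralOrder A
  have := CStarAlgebra.spectralOrderedRing A
  have h := CStarAlgebra.increasingApproximateUnit A
  have hu := Ultrafilter.of_le (CStarAlgebra.approximateUnit A)
  exact ⟨Ultrafilter.of (CStarAlgebra.approximateUnit A),
    fun x => (h.tendsto_mul_left x).mono_left hu, h.eventually_norm.filter_mono hu⟩

/-- A bounded left module map on an algebra of compact operators, followed by right
multiplication by an element, is right multiplication by an element. -/
lemma exists_mul_eq_of_compact {H : Type*} [NormedAddCommGroup H] [InnerProductSpace ℂ H]
    [CompleteSpace H] (S : NonUnitalStarSubalgebra ℂ (H →L[ℂ] H))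
    (hclosed : IsClosed (S : Set (H →L[ℂ] H)))
    (hcompact : ∀ T : H →L[ℂ] H, T ∈ S → IsCompactOperator T)
    (f : S →L[ℂ] S) (hf : ∀ a x, f (a * x) = a * f x) (y : S) :
    ∃ t : S, ∀ x, f x * y = x * t := by
  have := hclosed
  obtain ⟨u, hu, hu1⟩ := exists_ultrafilter_approximateUnit S
  obtain ⟨T, hT⟩ := exists_weak_limit u (fun e : S => (f e : H →L[ℂ] H)) ‖f‖ (by
    filter_upwards [hu1] with e he
    calc ‖f e‖ ≤ ‖f‖ * ‖e‖ := f.le_opNorm e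
      _ ≤ ‖f‖ * 1 := by gcongr
      _ = ‖f‖ := mul_one _)
  have hxT : ∀ x : S, (x : H →L[ℂ] H) * T = f x := by
    intro x
    ext ξ
    refine ext_inner_right ℂ fun η => ?_
    have h1 : Tendsto (fun e : S => inner ℂ ((f (x * e) : H →L[ℂ] H) ξ) η) u
        (𝓝 (inner ℂ ((x * T : H →L[ℂ] H) ξ) η)) := by
      have := hT ξ (ContinuousLinearMap.adjoint (x : H →L[ℂ] H) η)
      rw [ContinuousLinearMap.adjoint_inner_right] at this
      refine this.congr fun e => ?_
      rw [ContinuousLinearMap.adjoint_inner_right, hf]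
      rfl
    have hc : Continuous fun a : S => inner ℂ ((f a : H →L[ℂ] H) ξ) η := by
      have : Continuous fun a : S => (f a : H →L[ℂ] H) := continuous_subtype_val.comp f.continuous
      fun_prop
    exact tendsto_nhds_unique h1 ((hc.tendsto x).comp (hu x))
  have hstrong : ∀ ξ, Tendsto (fun e : S => (e : H →L[ℂ] H) (T ξ)) u (𝓝 (T ξ)) := fun ξ =>
    tendsto_of_weak_of_contraction _ _ hu1 _ ((hT ξ (T ξ)).congr fun e => by rw [← hxT e]; rfl)
  have hnorm := tendsto_mul_of_compact (u : Filter S) (fun e => (e : H →L[ℂ] H)) hu1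
    (T * (y : H →L[ℂ] H)) ((hcompact y y.2).clm_comp T) (fun ξ => hstrong _)
  have hmem : T * (y : H →L[ℂ] H) ∈ S :=
    hclosed.mem_of_tendsto hnorm (.of_forall fun e => by
      rw [← mul_assoc, hxT e]
      exact (f e * y).2)
  refine ⟨⟨_, hmem⟩, fun x => Subtype.ext ?_⟩
  change (f x : H →L[ℂ] H) * y = x * (T * y)
  rw [← mul_assoc, hxT x]

/-- If `m (·, y)` is right multiplication by `t`, then `t` is controlled by `y`. -/
lemma norm_le_of_forall_eq_mul {A : Type*} [NonUnitalCStarAlgebra A] (m : A →L[ℂ] A →L[ℂ] A)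
    {y t : A} (h : ∀ x, m x y = x * t) : ‖t‖ ≤ ‖m‖ * ‖y‖ := by
  rcases (norm_nonneg t).eq_or_lt with h0 | h0
  · rw [← h0]; positivity
  · refine le_of_mul_le_mul_right ?_ h0
    calc ‖t‖ * ‖t‖ = ‖m (star t) y‖ := by rw [h, CStarRing.norm_star_mul_self]
      _ ≤ ‖m‖ * ‖star t‖ * ‖y‖ := m.le_opNorm₂ _ _
      _ = ‖m‖ * ‖y‖ * ‖t‖ := by rw [norm_star]; ring

/-- If `m (·, y * y')` is right multiplication by an element for all `y`, `y'`, then the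
elements in question depend linearly and continuously on the second variable of `m`. -/
lemma exists_left_of_mul {A : Type*} [NonUnitalCStarAlgebra A] (m : A →L[ℂ] A →L[ℂ] A)
    (h : ∀ y y', ∃ t, ∀ x, m x (y * y') = x * t) :
    ∃ L : A →L[ℂ] A, ∀ x y, m x y = x * L y := by
  have hex : ∀ y, ∃ t, ∀ x, m x y = x * t := by
    intro y
    obtain ⟨u, hu, -⟩ := exists_ultrafilter_approximateUnit A
    choose t ht using h y
    have hbound : ∀ e e', ‖t e - t e'‖ ≤ ‖m‖ * ‖y * e - y * e'‖ := fun e e' =>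
      norm_le_of_forall_eq_mul m fun x => by rw [map_sub, ht, ht, mul_sub]
    have hcauchy : Cauchy (map t (u : Filter A)) := by
      rw [cauchy_map_iff]
      refine ⟨inferInstance, ?_⟩
      rw [tendsto_uniformity_iff_dist_tendsto_zero]
      have hlim : Tendsto (fun p : A × A => ‖m‖ * ‖y * p.1 - y * p.2‖) (↑u ×ˢ ↑u) (𝓝 0) := by
        have := ((((hu y).comp tendsto_fst).sub ((hu y).comp tendsto_snd)).norm.const_mul ‖m‖ :
          Tendsto _ ((u : Filter A) ×ˢ (u : Filter A)) _)
        simpa using this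
      exact squeeze_zero (fun _ => dist_nonneg)
        (fun p => by rw [dist_eq_norm]; exact hbound p.1 p.2) hlim
    obtain ⟨s, hs⟩ := CompleteSpace.complete hcauchy
    refine ⟨s, fun x => ?_⟩
    have h1 : Tendsto (fun e => m x (y * e)) u (𝓝 (m x y)) := ((m x).continuous.tendsto y).comp (hu y)
    have h2 : Tendsto (fun e => x * t e) u (𝓝 (x * s)) := Tendsto.const_mul x hs
    exact tendsto_nhds_unique h1 (h2.congr fun e => (ht e x).symm)
  choose L hL using hex
  have huniq : ∀ y t, (∀ x, m x y = x * t) → L y = t := by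
    intro y t ht
    have := norm_le_of_forall_eq_mul m (y := 0) (t := L y - t) fun x => by
      rw [mul_sub, ← hL, ← ht]; simp
    simpa [sub_eq_zero] using this
  let L₀ : A →ₗ[ℂ] A :=
    { toFun := L
      map_add' := fun y z => huniq _ _ fun x => by rw [map_add, hL, hL, mul_add]
      map_smul' := fun c y => huniq _ _ fun x => by
        rw [map_smul, hL, RingHom.id_apply, mul_smul_comm] }
  exact ⟨L₀.mkContinuous ‖m‖ fun y => norm_le_of_forall_eq_mul m (hL y), fun x y => hL y x⟩

/-- The adjoint `(x, y) ↦ star (m (star y, star x))` of a continuous bilinear map. -/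
lemma exists_adjoint_bilinear {A : Type*} [NonUnitalCStarAlgebra A] (m : A →L[ℂ] A →L[ℂ] A) :
    ∃ m' : A →L[ℂ] A →L[ℂ] A, ∀ x y, m' x y = star (m (star y) (star x)) :=
  ⟨(LinearMap.mk₂ ℂ (fun x y => star (m (star y) (star x)))
    (by intros; simp) (by intros; simp) (by intros; simp) (by intros; simp)).mkContinuous₂ ‖m‖
      (fun x y => by
        have := m.le_opNorm₂ (star y) (star x)
        simp only [LinearMap.mk₂_apply, norm_star] at this ⊢
        linarith),
    fun x y => rfl⟩

/-- A quasi-centralizer is linear over `A` in each variable separately: the factor on the other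
side is removed by an approximate unit, respectively by faithfulness of multiplication. -/
lemma IsQuasiCentralizer.map_mul {A : Type*} [NonUnitalCStarAlgebra A] {m : A →L[ℂ] A →L[ℂ] A}
    (hm : IsQuasiCentralizer m) :
    (∀ a x y, m (a * x) y = a * m x y) ∧ ∀ x y b, m x (y * b) = m x y * b := by
  have hl : ∀ a x y, m (a * x) y = a * m x y := by
    intro a x y
    obtain ⟨u, hu, -⟩ := exists_ultrafilter_approximateUnit A
    have h1 : Tendsto (fun e => m (a * x) (y * e)) u (𝓝 (m (a * x) y)) :=
      ((m (a * x)).continuous.tendsto y).comp (hu y)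
    exact tendsto_nhds_unique h1 ((hu (a * m x y)).congr fun e => (hm a x y e).symm)
  refine ⟨hl, fun x y b => ?_⟩
  rw [← sub_eq_zero, ← CStarRing.star_mul_self_eq_zero_iff, mul_sub, ← hl, hm, mul_assoc, sub_self]

/-- The left half of the double centralizer attached to a quasi-centralizer. -/
lemma IsQuasiCentralizer.exists_left {H : Type*} [NormedAddCommGroup H] [InnerProductSpace ℂ H]
    [CompleteSpace H] {S : NonUnitalStarSubalgebra ℂ (H →L[ℂ] H)}
    [hclosed : IsClosed (S : Set (H →L[ℂ] H))]
    (hcompact : ∀ T : H →L[ℂ] H, T ∈ S → IsCompactOperator T)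
    {m : S →L[ℂ] S →L[ℂ] S} (hm : IsQuasiCentralizer m) :
    ∃ L : S →L[ℂ] S, ∀ x y, m x y = x * L y := by
  obtain ⟨hl, hr⟩ := hm.map_mul
  refine exists_left_of_mul m fun y y' => ?_
  obtain ⟨t, ht⟩ := exists_mul_eq_of_compact S hclosed hcompact (m.flip y) (fun a x => hl a x y) y'
  exact ⟨t, fun x => (hr x y y').trans (ht x)⟩

/-- The left half suffices: the right half is the conjugate of the left half for the adjoint
quasi-centralizer. -/
lemma QMeqM_of_exists_left {A : Type*} [NonUnitalCStarAlgebra A]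
    (H : ∀ m : A →L[ℂ] A →L[ℂ] A, IsQuasiCentralizer m → ∃ L : A →L[ℂ] A, ∀ x y, m x y = x * L y) :
    QMeqM A := by
  intro m hm
  obtain ⟨m', hm'⟩ := exists_adjoint_bilinear m
  have hq : IsQuasiCentralizer m' := fun a x y b => by
    rw [hm', hm', star_mul, star_mul, hm, star_mul, star_mul, star_star, star_star, mul_assoc]
  obtain ⟨L, hL⟩ := H m hm
  obtain ⟨L', hL'⟩ := H m' hq
  let R : A →L[ℂ] A :=
    ((starL ℂ : A ≃L⋆[ℂ] A) : A →L⋆[ℂ] A).comp (L'.comp ((starL ℂ : A ≃L⋆[ℂ] A) : A →L⋆[ℂ] A))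
  refine ⟨L, R, fun x y => ?_, hL⟩
  have h := hL' (star y) (star x)
  rw [hm', star_star, star_star, hL] at h
  change star (L' (star x)) * y = x * L y
  rw [← star_star (x * L y), h, star_mul, star_star]

/-- If `A` is a closed *-subalgebra of `B(H)` all of whose elements are
compact operators, then `QM(A) = M(A)`. -/
theorem QMeqM_of_subalgebra_of_compact_operators
    (H : Type*) [NormedAddCommGroup H] [InnerProductSpace ℂ H] [CompleteSpace H]
    (S : NonUnitalStarSubalgebra ℂ (H →L[ℂ] H))
    (hclosed : IsClosed (S : Set (H →L[ℂ] H)))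
    (hcompact : ∀ T : H →L[ℂ] H, T ∈ S → IsCompactOperator T) :
    QMeqM ↥S := by
  have := hclosed
  exact QMeqM_of_exists_left fun m hm => IsQuasiCentralizer.exists_left hcompact hm
end

section
/- Let A be any C*-algebra. Then LM(A) = M(A) if and only if QM(A) = M(A); that is, every bounded left centralizer of A is a multiplier (for every continuous linear map L : A → A with L(x·y) = L(x)·y for all x, y there exists a continuous linear map R : A → A with R(x)·y = x·L(y) for all x, y) if and only if every quasi-centralizer of A comes from a multiplier. -/
/-- A closed property that holds for all products holds everywhere, because a C⋆-algebra has an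
approximate unit. -/
theorem forall_of_isClosed_of_mul {A : Type*} [NonUnitalCStarAlgebra A] {P : A → Prop}
    (hcl : IsClosed {x | P x}) (h : ∀ a b : A, P (a * b)) (x : A) : P x := by
  let _ := CStarAlgebra.spectralOrder A
  let _ := CStarAlgebra.spectralOrderedRing A
  have hu := CStarAlgebra.increasingApproximateUnit A
  exact hcl.mem_of_tendsto (hu.tendsto_mul_left x) (Filter.Eventually.of_forall fun e => h x e)

theorem eq_of_forall_mul_left_eq {A : Type*} [NonUnitalCStarAlgebra A] {u v : A}
    (h : ∀ x : A, x * u = x * v) : u = v :=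
  (ContinuousLinearMap.isometry_mul_flip ℂ (E := A)).injective
    (ContinuousLinearMap.ext fun x => by simpa using h x)

theorem IsQuasiCentralizer.map_mul_left_s10 {A : Type*} [NonUnitalCStarAlgebra A]
    {m : A →L[ℂ] A →L[ℂ] A} (hm : IsQuasiCentralizer m) (a x y : A) :
    m (a * x) y = a * m x y := by
  -- For products `x = c * d`, `y = e * f` both sides equal `a * c * m d e * f`.
  refine forall_of_isClosed_of_mul (P := fun y => m (a * x) y = a * m x y)
    (isClosed_eq (by fun_prop) (by fun_prop)) (fun e f => ?_) y
  refine forall_of_isClosed_of_mul (P := fun x => m (a * x) (e * f) = a * m x (e * f))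
    (isClosed_eq (by fun_prop) (by fun_prop)) (fun c d => ?_) x
  rw [hm c d e f, ← mul_assoc a c d, hm (a * c) d e f]
  simp only [mul_assoc]

theorem IsQuasiCentralizer.map_mul_right_s10 {A : Type*} [NonUnitalCStarAlgebra A]
    {m : A →L[ℂ] A →L[ℂ] A} (hm : IsQuasiCentralizer m) (x y b : A) :
    m x (y * b) = m x y * b :=
  eq_of_forall_mul_left_eq fun a => by
    rw [← hm.map_mul_left_s10, hm a x y b, mul_assoc]

/-- The adjoint form of `LM(A) = M(A)`: every right centralizer is a multiplier. -/
theorem exists_left_of_right {A : Type*} [NonUnitalCStarAlgebra A]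
    (H : ∀ L : A →L[ℂ] A, (∀ x y : A, L (x * y) = L x * y) →
      ∃ R : A →L[ℂ] A, ∀ x y : A, R x * y = x * L y)
    (R : A →L[ℂ] A) (hR : ∀ x y : A, R (x * y) = x * R y) :
    ∃ T : A → A, ∀ x y : A, R x * y = x * T y := by
  let L : A →L[ℂ] A :=
    ((starL ℂ : A ≃L⋆[ℂ] A) : A →L⋆[ℂ] A).comp (R.comp ((starL ℂ : A ≃L⋆[ℂ] A) : A →L⋆[ℂ] A))
  have hL : ∀ x, L x = star (R (star x)) := fun x => rfl
  obtain ⟨S, hS⟩ := H L fun x y => by simp [hL, hR]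
  refine ⟨fun y => star (S (star y)), fun x y => star_injective ?_⟩
  have h := hS (star y) (star x)
  simp only [hL, star_star] at h
  simp [h]

/-- If every left centralizer is a multiplier, each `m.flip y` is right multiplication by an element
of `A`: the set of such `y` is closed and contains all products. -/
theorem IsQuasiCentralizer.flip_mem_range {A : Type*} [NonUnitalCStarAlgebra A]
    (H : ∀ L : A →L[ℂ] A, (∀ x y : A, L (x * y) = L x * y) →
      ∃ R : A →L[ℂ] A, ∀ x y : A, R x * y = x * L y)
    {m : A →L[ℂ] A →L[ℂ] A} (hm : IsQuasiCentralizer m) (y : A) :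
    m.flip y ∈ Set.range (ContinuousLinearMap.mul ℂ A).flip := by
  refine forall_of_isClosed_of_mul
    (P := fun y => m.flip y ∈ Set.range (ContinuousLinearMap.mul ℂ A).flip)
    ((ContinuousLinearMap.isometry_mul_flip ℂ (E := A)).isClosedEmbedding.isClosed_range.preimage
      m.flip.continuous) (fun c b => ?_) y
  obtain ⟨T, hT⟩ := exists_left_of_right H (m.flip c) fun x y => by simp [hm.map_mul_left_s10]
  refine ⟨T b, ContinuousLinearMap.ext fun x => ?_⟩
  simpa [hm.map_mul_right_s10] using (hT x b).symm

/-- For any C*-algebra `A`, `LM(A) = M(A)` if and only if `QM(A) = M(A)`: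
every bounded left centralizer of `A` is a multiplier iff every quasi-centralizer of `A`
comes from a multiplier. -/
theorem LMeqM_iff_QMeqM {A : Type*} [NonUnitalCStarAlgebra A] :
    (∀ L : A →L[ℂ] A, (∀ x y : A, L (x * y) = L x * y) →
      ∃ R : A →L[ℂ] A, ∀ x y : A, R x * y = x * L y) ↔ QMeqM A := by
  constructor
  · intro H m hm
    have hiso := ContinuousLinearMap.isometry_mul_flip ℂ (E := A)
    let e := (ContinuousLinearMap.mul ℂ A).flip.equivRange hiso.injective
      hiso.isClosedEmbedding.isClosed_range
    let N : A →L[ℂ] (ContinuousLinearMap.mul ℂ A).flip.range :=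
      m.flip.codRestrict _ fun y => hm.flip_mem_range H y
    let L : A →L[ℂ] A := (e.symm : _ →L[ℂ] A).comp N
    have hL : ∀ x y, m x y = x * L y := fun x y => by
      have h : e (L y) = N y := e.apply_symm_apply _
      exact (DFunLike.congr_fun (congrArg Subtype.val h) x).symm
    obtain ⟨R, hR⟩ := H L fun y z => eq_of_forall_mul_left_eq fun x => by
      rw [← hL, hm.map_mul_right_s10, hL, mul_assoc]
    exact ⟨L, R, hR, hL⟩
  · intro H L hL
    obtain ⟨L', R, hR, hm⟩ := H ((ContinuousLinearMap.mul ℂ A).bilinearComp (.id ℂ A) L)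
      fun a x y b => by simp [hL, mul_assoc]
    exact ⟨R, fun x y => (hR x y).trans (by simpa using (hm x y).symm)⟩
end

section
/- Let H₁ and H₂ be separable infinite-dimensional complex Hilbert spaces, and let A and B be σ-unital closed *-subalgebras of B(H₁) and B(H₂) respectively with K(H₁) ⊆ A and K(H₂) ⊆ B. Define LM(X) = {T ∈ B(H₂,H₁) : T∘b is compact for all b ∈ B} and RM(X) = {T ∈ B(H₂,H₁) : a∘T is compact for all a ∈ A}. Then LM(X) ⊆ RM(X) if and only if either the identity operator on H₂ belongs to B or A = K(H₁). -/
/-!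
The implication from right to left is immediate: if `1 ∈ B`, every `T ∈ LM(X)` is itself compact,
and if `A = K(H₁)`, every `a ∘ T` is compact.

For the converse, suppose `1 ∉ B` and that some `a ∈ A` is not compact; an operator
`T ∈ LM(X) \ RM(X)` is constructed. Let `e ∈ B` be positive with `e B` dense in `B`. Since `B`
contains the rank-one operators, `e` is injective (`injective_of_dense`). It is not surjective:
otherwise it is invertible, so `e B` is closed, hence `e = e b` for some `b ∈ B`, which forces
`b = 1` (`id_mem_of_surjective`). A self-adjoint, injective, non-surjective operator is not bounded
below on any finite-codimensional subspace (`exists_unit_small`), so there is an orthonormal sequence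
`ξ` in `H₂` with `∑ ‖e (ξ n)‖ < ∞` (`exists_orthonormal_small`). Dually, as `a` is not a norm limit
of finite-rank operators, there is an orthonormal sequence `η` in `H₁` along which `‖a (η n)‖` stays
above some `δ > 0` (`exists_orthonormal_large`).

Let `T` be the partial isometry `∑ |η n⟩⟨ξ n|`. Then `T e = ∑ |η n⟩⟨e (ξ n)|` converges in norm, so
`T e` is compact, and so is `T b` for every `b ∈ B` by density of `e B`. But `a T (ξ n) = a (η n)`
does not tend to `0`, while compact operators map orthonormal sequences to null sequences, so
`a T` is not compact.
-/

/-- A closed *-subalgebra of `B(H)`, given as a set: a norm-closed linear subspace closed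
under composition and Hilbert-space adjoints. -/
structure IsClosedStarSubalgebraOfOperators {H : Type*} [NormedAddCommGroup H]
    [InnerProductSpace ℂ H] [CompleteSpace H] (A : Set (H →L[ℂ] H)) : Prop where
  isClosed : IsClosed A
  zero_mem : (0 : H →L[ℂ] H) ∈ A
  add_mem : ∀ x y : H →L[ℂ] H, x ∈ A → y ∈ A → x + y ∈ A
  smul_mem : ∀ (c : ℂ) (x : H →L[ℂ] H), x ∈ A → c • x ∈ A
  mul_mem : ∀ x y : H →L[ℂ] H, x ∈ A → y ∈ A → x.comp y ∈ A
  star_mem : ∀ x : H →L[ℂ] H, x ∈ A → ContinuousLinearMap.adjoint x ∈ A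

/-- The operator algebra `A` is σ-unital: it contains a positive element `e` such that
`{e ∘ a : a ∈ A}` is dense in `A`. -/
def IsSigmaUnitalOperatorAlgebra {H : Type*} [NormedAddCommGroup H]
    [InnerProductSpace ℂ H] [CompleteSpace H] (A : Set (H →L[ℂ] H)) : Prop :=
  ∃ e ∈ A, e.IsPositive ∧ A ⊆ closure {x : H →L[ℂ] H | ∃ a ∈ A, x = e.comp a}

open Filter Topology InnerProductSpace

section Auxiliary

variable {H F : Type*} [NormedAddCommGroup H] [InnerProductSpace ℂ H]
  [NormedAddCommGroup F] [InnerProductSpace ℂ F] [CompleteSpace F]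

theorem isCompactOperator_rankOne (x : F) (y : H) : IsCompactOperator (rankOne ℂ x y) := by
  rw [rankOne_def']
  exact (isCompactOperator_of_locallyCompactSpace_rng
    (ContinuousLinearMap.toSpanSingleton ℂ x)).comp_clm (innerSL ℂ y)

theorem isCompactOperator_of_mem_closure {S : Set (H →L[ℂ] F)}
    (hS : ∀ T ∈ S, IsCompactOperator T) {T : H →L[ℂ] F} (hT : T ∈ closure S) :
    IsCompactOperator T := by
  obtain ⟨u, hu, hlim⟩ := mem_closure_iff_seq_limit.1 hT
  exact isCompactOperator_of_tendsto hlim (Eventually.of_forall fun n => hS _ (hu n))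

theorem orthonormal_of_lt {f : ℕ → H} (h1 : ∀ n, ‖f n‖ = 1)
    (h2 : ∀ m n, m < n → inner ℂ (f m) (f n) = 0) : Orthonormal ℂ f := by
  refine ⟨h1, fun m n hmn => ?_⟩
  rcases lt_or_gt_of_ne hmn with h | h
  · exact h2 m n h
  · exact inner_eq_zero_symm.1 (h2 n m h)

variable [CompleteSpace H]

/-- If `e B` is dense in a set `B` of operators containing the compact ones, then `e` is injective:
a vector `x` in the kernel is orthogonal to the range of every operator in the closure of `e B`, in
particular to the range of `|x⟩⟨x|`. -/
theorem injective_of_dense {B : Set (H →L[ℂ] H)} (hK : ∀ T : H →L[ℂ] H, IsCompactOperator T → T ∈ B)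
    {e : H →L[ℂ] H} (he : IsSelfAdjoint e)
    (hd : B ⊆ closure {x : H →L[ℂ] H | ∃ a ∈ B, x = e.comp a}) : Function.Injective e := by
  rw [injective_iff_map_eq_zero]
  intro x hx
  have hcl : IsClosed {y : H →L[ℂ] H | inner ℂ x (y x) = 0} :=
    isClosed_eq (by fun_prop) continuous_const
  have hsub : {y : H →L[ℂ] H | ∃ a ∈ B, y = e.comp a} ⊆ {y | inner ℂ x (y x) = 0} := by
    rintro _ ⟨a, -, rfl⟩
    have := he.isSymmetric x (a x)
    simp only [ContinuousLinearMap.coe_coe, hx, inner_zero_left] at this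
    simpa using this.symm
  have := closure_minimal hsub hcl (hd (hK _ (isCompactOperator_rankOne x x)))
  simpa using this

/-- If `e` is invertible, then `e B` is closed, so density yields `e ∈ e B`, i.e. `1 ∈ B`. -/
theorem id_mem_of_surjective {B : Set (H →L[ℂ] H)} (hB : IsClosed B) {e : H →L[ℂ] H} (heB : e ∈ B)
    (hd : B ⊆ closure {x : H →L[ℂ] H | ∃ a ∈ B, x = e.comp a})
    (hinj : Function.Injective e) (hsurj : Function.Surjective e) :
    ContinuousLinearMap.id ℂ H ∈ B := by
  let E := ContinuousLinearEquiv.ofBijective e (LinearMap.ker_eq_bot.2 hinj)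
    (LinearMap.range_eq_top.2 hsurj)
  have hE : ∀ a : H →L[ℂ] H, (E.symm : H →L[ℂ] H).comp (e.comp a) = a := by
    intro a
    ext x
    exact E.symm_apply_apply (a x)
  have hcl : IsClosed {x : H →L[ℂ] H | (E.symm : H →L[ℂ] H).comp x ∈ B} :=
    hB.preimage (by fun_prop)
  have hsub : {x : H →L[ℂ] H | ∃ a ∈ B, x = e.comp a} ⊆
      {x | (E.symm : H →L[ℂ] H).comp x ∈ B} := by
    rintro _ ⟨a, ha, rfl⟩
    simpa [hE] using ha
  have := closure_minimal hsub hcl (hd heB)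
  rw [Set.mem_ofPred_eq, ← ContinuousLinearMap.comp_id e, hE] at this
  exact this

/-- If `e` were bounded below on `Mᗮ`, its range `e(Mᗮ) + e(M)` would be closed; it is also dense,
`e` being self-adjoint and injective. -/
theorem exists_unit_small {e : H →L[ℂ] H} (he : IsSelfAdjoint e) (hinj : Function.Injective e)
    (hsurj : ¬ Function.Surjective e) (M : Submodule ℂ H) [FiniteDimensional ℂ M]
    {ε : ℝ} (hε : 0 < ε) : ∃ x ∈ Mᗮ, ‖x‖ = 1 ∧ ‖e x‖ ≤ ε := by
  by_contra! hcon
  have hlow : ∀ x ∈ Mᗮ, ε * ‖x‖ ≤ ‖e x‖ := by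
    intro x hx
    rcases eq_or_ne x 0 with rfl | h0
    · simp
    have hn : 0 < ‖x‖ := norm_pos_iff.2 h0
    have h := hcon (((‖x‖⁻¹ : ℝ) : ℂ) • x) (Mᗮ.smul_mem _ hx) (by simp [norm_smul, hn.ne'])
    rw [map_smul, norm_smul] at h
    simp only [Complex.norm_real, norm_inv, norm_norm] at h
    rw [inv_mul_eq_div, lt_div_iff₀ hn] at h
    exact h.le
  apply hsurj
  have hcl : IsClosed ((Mᗮ.map (e : H →ₗ[ℂ] H) : Submodule ℂ H) : Set H) := by
    have hanti : AntilipschitzWith (Real.toNNReal ε⁻¹) (e.comp Mᗮ.subtypeL) := by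
      refine ContinuousLinearMap.antilipschitz_of_bound _ fun x => ?_
      rw [Real.coe_toNNReal _ (inv_pos.2 hε).le, inv_mul_eq_div, le_div_iff₀ hε, mul_comm]
      exact hlow x x.2
    have := hanti.isClosed_range (e.comp Mᗮ.subtypeL).uniformContinuous
    convert this using 1
    ext y
    simp
  have hsum := Submodule.isClosed_sup_finiteDimensional _ (M.map (e : H →ₗ[ℂ] H)) hcl
  rw [← Submodule.map_sup, sup_comm, Submodule.sup_orthogonal_of_hasOrthogonalProjection,
    Submodule.map_top] at hsum
  rw [← ContinuousLinearMap.coe_coe, ← LinearMap.range_eq_top,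
    ← hsum.submodule_topologicalClosure_eq, Submodule.topologicalClosure_eq_top_iff,
    ContinuousLinearMap.orthogonal_range, he.adjoint_eq]
  exact LinearMap.ker_eq_bot.2 hinj

/-- A non-compact operator stays away from `0` on the unit vectors of finite-codimensional
subspaces; otherwise it would be a limit of the finite-rank operators `a P_M`. -/
theorem exists_unit_large {a : H →L[ℂ] F} (ha : ¬ IsCompactOperator a) :
    ∃ δ > 0, ∀ M : Submodule ℂ H, FiniteDimensional ℂ M → ∃ x ∈ Mᗮ, ‖x‖ = 1 ∧ δ ≤ ‖a x‖ := by
  by_contra! hcon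
  apply ha
  refine isCompactOperator_of_mem_closure (S := {T | IsCompactOperator T}) (fun _ h => h) ?_
  rw [Metric.mem_closure_iff]
  intro ε hε
  obtain ⟨M, hM, hlt⟩ := hcon (ε / 2) (half_pos hε)
  refine ⟨a.comp M.starProjection, ?_, ?_⟩
  · have : IsCompactOperator (a.comp M.subtypeL) := isCompactOperator_of_locallyCompactSpace_rng _
    exact this.comp_clm M.orthogonalProjectionOnto
  rw [dist_eq_norm]
  refine lt_of_le_of_lt (ContinuousLinearMap.opNorm_le_bound _ (half_pos hε).le fun x => ?_)
    (half_lt_self hε)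
  have hmem : x - M.starProjection x ∈ Mᗮ := M.sub_starProjection_mem_orthogonal x
  have hnorm : ‖x - M.starProjection x‖ ≤ ‖x‖ := by
    rw [← M.starProjection_orthogonal_val]
    exact Mᗮ.norm_starProjection_apply_le x
  have key : ∀ y ∈ Mᗮ, ‖a y‖ ≤ ε / 2 * ‖y‖ := by
    intro y hy
    rcases eq_or_ne y 0 with rfl | h0
    · simp
    have hn : 0 < ‖y‖ := norm_pos_iff.2 h0
    have h := hlt (((‖y‖⁻¹ : ℝ) : ℂ) • y) (Mᗮ.smul_mem _ hy) (by simp [norm_smul, hn.ne'])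
    rw [map_smul, norm_smul] at h
    simp only [Complex.norm_real, norm_inv, norm_norm] at h
    rw [inv_mul_eq_div, div_lt_iff₀ hn] at h
    exact h.le
  calc ‖(a - a.comp M.starProjection) x‖ = ‖a (x - M.starProjection x)‖ := by simp
    _ ≤ ε / 2 * ‖x - M.starProjection x‖ := key _ hmem
    _ ≤ ε / 2 * ‖x‖ := by gcongr

theorem exists_orthonormal_small {e : H →L[ℂ] H} (he : IsSelfAdjoint e)
    (hinj : Function.Injective e) (hsurj : ¬ Function.Surjective e) :
    ∃ ξ : ℕ → H, Orthonormal ℂ ξ ∧ Summable fun n => ‖e (ξ n)‖ := by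
  obtain ⟨f, hf, hr⟩ := exists_seq_of_forall_finset_exists (fun x : H => ‖x‖ = 1)
    (fun x y => inner ℂ x y = 0 ∧ ‖e y‖ ≤ ‖e x‖ / 2) (by
      intro s hs
      -- By injectivity the finitely many numbers `‖e x‖`, `x ∈ s`, have a positive lower bound.
      obtain ⟨ε, hε, hle⟩ : ∃ ε > 0, ∀ x ∈ s, ε ≤ ‖e x‖ / 2 := by
        rcases s.eq_empty_or_nonempty with rfl | hne
        · exact ⟨1, one_pos, by simp⟩
        obtain ⟨x₀, hx₀, hmin⟩ := s.exists_min_image (fun x => ‖e x‖) hne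
        refine ⟨‖e x₀‖ / 2, half_pos (norm_pos_iff.2 fun h => ?_), fun x hx => ?_⟩
        · have h1 := hs x₀ hx₀
          rw [hinj (h.trans (map_zero e).symm), norm_zero] at h1
          exact zero_ne_one h1
        · have := hmin x hx
          linarith
      have : FiniteDimensional ℂ (Submodule.span ℂ (s : Set H)) :=
        FiniteDimensional.span_finset ℂ s
      obtain ⟨y, hy, hy1, hye⟩ := exists_unit_small he hinj hsurj
        (Submodule.span ℂ (s : Set H)) hε
      exact ⟨y, hy1, fun x hx => ⟨(Submodule.mem_orthogonal _ _).1 hy x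
        (Submodule.subset_span hx), hye.trans (hle x hx)⟩⟩)
  refine ⟨f, orthonormal_of_lt hf fun m n h => (hr m n h).1, ?_⟩
  have hgeo : ∀ n, ‖e (f n)‖ ≤ ‖e (f 0)‖ * (1 / 2) ^ n := by
    intro n
    induction n with
    | zero => simp
    | succ n ih =>
      have := (hr n (n + 1) n.lt_succ_self).2
      rw [pow_succ]
      linarith
  exact Summable.of_nonneg_of_le (fun _ => norm_nonneg _) hgeo
    (summable_geometric_two.mul_left _)

theorem exists_orthonormal_large {a : H →L[ℂ] F} (ha : ¬ IsCompactOperator a) :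
    ∃ δ > 0, ∃ η : ℕ → H, Orthonormal ℂ η ∧ ∀ n, δ ≤ ‖a (η n)‖ := by
  obtain ⟨δ, hδ, h⟩ := exists_unit_large ha
  obtain ⟨f, hf, hr⟩ := exists_seq_of_forall_finset_exists (fun x : H => ‖x‖ = 1 ∧ δ ≤ ‖a x‖)
    (fun x y => inner ℂ x y = 0) (by
      intro s _
      obtain ⟨y, hy, hy1⟩ := h (Submodule.span ℂ (s : Set H)) (FiniteDimensional.span_finset ℂ s)
      exact ⟨y, hy1, fun x hx => (Submodule.mem_orthogonal _ _).1 hy x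
        (Submodule.subset_span hx)⟩)
  exact ⟨δ, hδ, f, orthonormal_of_lt (fun n => (hf n).1) hr, fun n => (hf n).2⟩

/-- The partial isometry `∑ |η n⟩⟨ξ n|`, obtained by factoring through `ℓ²`. -/
theorem exists_partialIsometry {ξ : ℕ → H} {η : ℕ → F} (hξ : Orthonormal ℂ ξ)
    (hη : Orthonormal ℂ η) :
    ∃ T : H →L[ℂ] F, ∀ y, HasSum (fun n => inner ℂ (ξ n) y • η n) (T y) := by
  let U := hξ.orthogonalFamily.linearIsometry
  let V := hη.orthogonalFamily.linearIsometry
  refine ⟨V.toContinuousLinearMap.comp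
    (ContinuousLinearMap.adjoint U.toContinuousLinearMap), fun y => ?_⟩
  have h := hη.orthogonalFamily.hasSum_linearIsometry
    (ContinuousLinearMap.adjoint U.toContinuousLinearMap y)
  refine HasSum.congr_fun h fun n => ?_
  have hc : (ContinuousLinearMap.adjoint U.toContinuousLinearMap y) n = inner ℂ (ξ n) y := by
    have h1 := lp.inner_single_left (𝕜 := ℂ) (G := fun _ : ℕ => ℂ) n (1 : ℂ)
      (ContinuousLinearMap.adjoint U.toContinuousLinearMap y)
    rw [ContinuousLinearMap.adjoint_inner_right] at h1
    have h2 : U.toContinuousLinearMap (lp.single 2 n (1 : ℂ)) = ξ n := by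
      simp [U]
    rw [h2] at h1
    simpa using h1.symm
  rw [hc]
  simp

/-- Orthonormal sequences converge weakly to `0` by Bessel's inequality, so a compact operator
cannot stay away from `0` along one. -/
theorem not_isCompactOperator_of_orthonormal {S : H →L[ℂ] F} {ξ : ℕ → H} (hξ : Orthonormal ℂ ξ)
    {δ : ℝ} (hδ : 0 < δ) (h : ∀ n, δ ≤ ‖S (ξ n)‖) : ¬ IsCompactOperator S := by
  intro hS
  have hcomp := hS.isCompact_closure_image_closedBall 1
  obtain ⟨z, -, φ, hφ, hz⟩ := hcomp.tendsto_subseq (x := fun n => S (ξ n))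
    fun n => subset_closure ⟨ξ n, by simp [hξ.1 n], rfl⟩
  have hweak : ∀ y, Tendsto (fun n => inner ℂ (ξ n) y) atTop (𝓝 0) := by
    intro y
    have h1 := (hξ.inner_products_summable (x := y)).tendsto_atTop_zero
    rw [tendsto_zero_iff_norm_tendsto_zero]
    have h2 := h1.sqrt
    simpa using h2
  have hz0 : inner ℂ z z = (0 : ℂ) := by
    refine tendsto_nhds_unique (hz.inner (tendsto_const_nhds (x := z))) ?_
    have := (hweak (ContinuousLinearMap.adjoint S z)).comp hφ.tendsto_atTop
    refine this.congr fun n => ?_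
    simp [ContinuousLinearMap.adjoint_inner_right]
  have hzn : δ ≤ ‖z‖ := ge_of_tendsto' hz.norm fun n => h (φ n)
  rw [inner_self_eq_zero.1 hz0, norm_zero] at hzn
  linarith

/-- If `∑ ‖e (ξ n)‖ < ∞`, then `T e = ∑ |η n⟩⟨e (ξ n)|` is a norm-convergent sum of rank-one
operators. -/
theorem isCompactOperator_comp_of_summable {e : H →L[ℂ] H} (he : IsSelfAdjoint e) {ξ : ℕ → H}
    {η : ℕ → F} (hη : Orthonormal ℂ η) (hs : Summable fun n => ‖e (ξ n)‖) {T : H →L[ℂ] F}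
    (hT : ∀ y, HasSum (fun n => inner ℂ (ξ n) y • η n) (T y)) : IsCompactOperator (T.comp e) := by
  have hsum : Summable fun n => rankOne ℂ (η n) (e (ξ n)) := by
    refine Summable.of_norm ?_
    simpa [hη.1] using hs
  have heq : T.comp e = ∑' n, rankOne ℂ (η n) (e (ξ n)) := by
    ext y
    refine (hT (e y)).unique ?_
    have h := hsum.hasSum.mapL (ContinuousLinearMap.apply ℂ F y)
    refine h.congr_fun fun n => ?_
    have hsymm : inner ℂ (e (ξ n)) y = inner ℂ (ξ n) (e y) := he.isSymmetric (ξ n) y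
    simp [hsymm]
  rw [heq]
  refine isCompactOperator_of_tendsto hsum.hasSum (Eventually.of_forall fun s => ?_)
  exact Submodule.sum_mem (compactOperator (RingHom.id ℂ) H F)
    fun n _ => isCompactOperator_rankOne _ _

end Auxiliary

/-- With `LM(X) = {T : T ∘ b compact ∀ b ∈ B}` and
`RM(X) = {T : a ∘ T compact ∀ a ∈ A}`, one has `LM(X) ⊆ RM(X)` iff `1 ∈ B` or
`A = K(H₁)`. -/
theorem LM_subset_RM_iff
    {H₁ H₂ : Type*} [NormedAddCommGroup H₁] [InnerProductSpace ℂ H₁] [CompleteSpace H₁]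
    [NormedAddCommGroup H₂] [InnerProductSpace ℂ H₂] [CompleteSpace H₂]
    [TopologicalSpace.SeparableSpace H₁] [TopologicalSpace.SeparableSpace H₂]
    (hH₁ : ¬ FiniteDimensional ℂ H₁) (hH₂ : ¬ FiniteDimensional ℂ H₂)
    {A : Set (H₁ →L[ℂ] H₁)} {B : Set (H₂ →L[ℂ] H₂)}
    (hA : IsClosedStarSubalgebraOfOperators A) (hB : IsClosedStarSubalgebraOfOperators B)
    (hKA : ∀ T : H₁ →L[ℂ] H₁, IsCompactOperator T → T ∈ A)
    (hKB : ∀ T : H₂ →L[ℂ] H₂, IsCompactOperator T → T ∈ B)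
    (hAσ : IsSigmaUnitalOperatorAlgebra A) (hBσ : IsSigmaUnitalOperatorAlgebra B) :
    {T : H₂ →L[ℂ] H₁ | ∀ b ∈ B, IsCompactOperator (T.comp b)} ⊆
        {T : H₂ →L[ℂ] H₁ | ∀ a ∈ A, IsCompactOperator (a.comp T)} ↔
      (ContinuousLinearMap.id ℂ H₂ ∈ B ∨
        A = {T : H₁ →L[ℂ] H₁ | IsCompactOperator T}) := by
  constructor
  · intro hsub
    by_contra! hcon
    obtain ⟨h1, hAK⟩ := hcon
    obtain ⟨a, haA, ha⟩ : ∃ a ∈ A, ¬ IsCompactOperator a := by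
      by_contra! hall
      exact hAK (Set.Subset.antisymm hall hKA)
    obtain ⟨e, heB, hepos, hd⟩ := hBσ
    have he := hepos.isSelfAdjoint
    have hinj := injective_of_dense hKB he hd
    have hsurj : ¬ Function.Surjective e := fun h =>
      h1 (id_mem_of_surjective hB.isClosed heB hd hinj h)
    obtain ⟨ξ, hξ, hs⟩ := exists_orthonormal_small he hinj hsurj
    obtain ⟨δ, hδ, η, hη, hlarge⟩ := exists_orthonormal_large ha
    obtain ⟨T, hT⟩ := exists_partialIsometry hξ hη
    have hTe := isCompactOperator_comp_of_summable he hη hs hT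
    have hTξ : ∀ m, T (ξ m) = η m := by
      intro m
      refine (hT (ξ m)).unique ?_
      convert hasSum_single m ?_ using 1
      · simp [hξ.1 m]
      · intro n hn
        simp [hξ.2 hn]
    have hTLM : ∀ b ∈ B, IsCompactOperator (T.comp b) := by
      intro b hb
      have hmem : T.comp b ∈ closure ((fun x : H₂ →L[ℂ] H₂ => T.comp x) ''
          {x | ∃ a ∈ B, x = e.comp a}) :=
        image_closure_subset_closure_image (by fun_prop) ⟨b, hd hb, rfl⟩
      refine isCompactOperator_of_mem_closure ?_ hmem
      rintro _ ⟨_, ⟨c, -, rfl⟩, rfl⟩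
      exact hTe.comp_clm c
    refine not_isCompactOperator_of_orthonormal hξ hδ (fun n => ?_) (hsub hTLM a haA)
    simpa [hTξ] using hlarge n
  · rintro (h1 | hAK) T hT a ha
    · exact (hT _ h1).clm_comp a
    · rw [hAK] at ha
      exact IsCompactOperator.comp_clm ha T
end

section
/- Let H₁ and H₂ be separable infinite-dimensional complex Hilbert spaces, and let A and B be σ-unital closed *-subalgebras of B(H₁) and B(H₂) respectively with K(H₁) ⊆ A and K(H₂) ⊆ B. Define LM(X) = {T ∈ B(H₂,H₁) : T∘b is compact for all b ∈ B} and RM(X) = {T ∈ B(H₂,H₁) : a∘T is compact for all a ∈ A}. Then RM(X) ⊆ LM(X) if and only if either the identity operator on H₁ belongs to A or B = K(H₂). -/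
open Filter Topology

/-- If `S ∈ A` is coercive, then `‖1 - t S‖ < 1` for a suitable `t > 0`, so the elements
`1 - (1 - t S) ^ n` of `A` converge to the identity. -/
theorem id_mem_of_coercive {H : Type*} [NormedAddCommGroup H]
    [InnerProductSpace ℂ H] [CompleteSpace H] {A : Set (H →L[ℂ] H)}
    (hA : IsClosedStarSubalgebraOfOperators A) {S : H →L[ℂ] H} (hS : S ∈ A) {c : ℝ} (hc : 0 < c)
    (h : ∀ x, c * ‖x‖ ^ 2 ≤ RCLike.re (inner ℂ (S x) x)) :
    ContinuousLinearMap.id ℂ H ∈ A := by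
  set M : ℝ := ‖S‖ + c with hM
  have hMpos : 0 < M := by positivity
  have hcM : c ≤ M := by linarith [norm_nonneg S]
  -- `t = c / M ^ 2` minimises the bound `1 - 2 t c + t ^ 2 M ^ 2` for `‖1 - t S‖ ^ 2`.
  set t : ℝ := c / M ^ 2 with ht
  have htpos : 0 < t := by positivity
  set R : H →L[ℂ] H := 1 - (t : ℂ) • S with hR
  set q : ℝ := 1 - c ^ 2 / M ^ 2 with hq
  have hq0 : 0 ≤ q := by
    rw [hq, sub_nonneg, div_le_one (by positivity)]
    gcongr
  have hq1 : q < 1 := by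
    have : 0 < c ^ 2 / M ^ 2 := by positivity
    linarith
  have hRn : ‖R‖ ≤ √q := by
    refine ContinuousLinearMap.opNorm_le_bound _ (Real.sqrt_nonneg _) fun x => ?_
    refine le_of_sq_le_sq ?_ (by positivity)
    rw [mul_pow, Real.sq_sqrt hq0]
    have hRx : R x = x - (t : ℂ) • S x := by simp [hR]
    have hSx : ‖S x‖ ≤ M * ‖x‖ := (S.le_opNorm x).trans (by gcongr; linarith)
    have hSx2 : ‖S x‖ ^ 2 ≤ M ^ 2 * ‖x‖ ^ 2 := by
      rw [← mul_pow]; gcongr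
    have hin : RCLike.re (inner ℂ x ((t : ℂ) • S x)) = t * RCLike.re (inner ℂ (S x) x) := by
      rw [inner_smul_right, inner_re_symm (S x) x]
      simp
    rw [hRx, @norm_sub_sq ℂ, hin, norm_smul, mul_pow]
    have e1 : ‖(t : ℂ)‖ ^ 2 = t ^ 2 := by simp
    rw [e1]
    have h1 := mul_le_mul_of_nonneg_left (h x) htpos.le
    have h2 := mul_le_mul_of_nonneg_left hSx2 (sq_nonneg t)
    have h3 : t * c = c ^ 2 / M ^ 2 := by rw [ht]; ring
    have h4 : t ^ 2 * M ^ 2 = c ^ 2 / M ^ 2 := by rw [ht]; field_simp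
    have h5 : q = 1 - 2 * (t * c) + t ^ 2 * M ^ 2 := by rw [h3, h4, hq]; ring
    rw [h5]
    nlinarith
  have hR1 : ‖R‖ < 1 := hRn.trans_lt (by rw [Real.sqrt_lt' one_pos]; simpa using hq1)
  have hmem : ∀ n : ℕ, 1 - R ^ n ∈ A := by
    intro n
    induction n with
    | zero => simpa using hA.zero_mem
    | succ k ih =>
      have hE : 1 - R ^ (k + 1) =
          (1 - R ^ k) + ((t : ℂ) • S + (-(t : ℂ)) • ((1 - R ^ k).comp S)) := by
        have : (1 - R ^ k).comp S = (1 - R ^ k) * S := rfl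
        rw [this, pow_succ]
        nth_rewrite 2 [hR]
        simp only [mul_sub, sub_mul, one_mul, mul_one, mul_smul_comm, smul_sub, neg_smul]
        abel
      rw [hE]
      exact hA.add_mem _ _ ih (hA.add_mem _ _ (hA.smul_mem _ _ hS)
        (hA.smul_mem _ _ (hA.mul_mem _ _ ih hS)))
  have hlim : Tendsto (fun n : ℕ => 1 - R ^ n) atTop (𝓝 (1 - 0)) :=
    tendsto_const_nhds.sub (tendsto_pow_atTop_nhds_zero_of_norm_lt_one hR1)
  rw [sub_zero] at hlim
  exact hA.isClosed.mem_of_tendsto hlim (Eventually.of_forall hmem)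

/-- When `1 ∉ A`, a positive `e ∈ A` is not bounded below on the orthogonal complement of a
finite-dimensional subspace. -/
theorem exists_unit_orthogonal_small {H : Type*} [NormedAddCommGroup H]
    [InnerProductSpace ℂ H] [CompleteSpace H] {A : Set (H →L[ℂ] H)}
    (hA : IsClosedStarSubalgebraOfOperators A)
    (hKA : ∀ T : H →L[ℂ] H, IsCompactOperator T → T ∈ A)
    (h1 : ContinuousLinearMap.id ℂ H ∉ A) {e : H →L[ℂ] H} (he : e ∈ A) (hpos : e.IsPositive)
    (F : Submodule ℂ H) [FiniteDimensional ℂ F] {ε : ℝ} (hε : 0 < ε) :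
    ∃ f : H, ‖f‖ = 1 ∧ ‖e f‖ ≤ ε ∧ f ∈ Fᗮ := by
  by_contra! hcon
  have hbelow : ∀ y ∈ Fᗮ, ε * ‖y‖ ≤ ‖e y‖ := by
    intro y hy
    by_cases hy0 : y = 0
    · simp [hy0]
    by_contra! hlt
    have hny : 0 < ‖y‖ := norm_pos_iff.2 hy0
    refine hcon ((‖y‖⁻¹ : ℂ) • y) ?_ ?_ (Submodule.smul_mem _ _ hy)
    · rw [norm_smul]; simp [hny.ne']
    · rw [map_smul, norm_smul]
      simp only [norm_inv, Complex.norm_real, norm_norm]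
      rw [inv_mul_le_iff₀ hny]
      linarith
  have hPc : IsCompactOperator F.starProjection := by
    have : IsCompactOperator F.orthogonalProjectionOnto :=
      isCompactOperator_of_locallyCompactSpace_dom _
    exact this.clm_comp F.subtypeL
  set P := F.starProjection with hP
  set N : ℝ := ‖e‖ with hN
  have hN0 : 0 ≤ N := norm_nonneg e
  -- With `p = ‖P x‖` and `r = ‖e x‖`, `ε ‖x‖ ≤ r + (ε + N) p`; Cauchy–Schwarz gives the constant.
  set D : ℝ := 1 + (ε + N) ^ 2 with hD
  have hDpos : 0 < D := by positivity
  refine h1 (id_mem_of_coercive hA (S := e.comp e + P) (c := ε ^ 2 / D)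
    (hA.add_mem _ _ (hA.mul_mem _ _ he he) (hKA _ hPc)) (by positivity) fun x => ?_)
  have hin : RCLike.re (inner ℂ ((e.comp e + P) x) x) = ‖e x‖ ^ 2 + ‖P x‖ ^ 2 := by
    have ha : inner ℂ (e (e x)) x = inner ℂ (e x) (e x) := hpos.isSymmetric (e x) x
    have hb := F.re_inner_starProjection_eq_normSq x
    rw [add_apply, ContinuousLinearMap.comp_apply, inner_add_left, map_add, ha,
      inner_self_eq_norm_sq, hb]
    rfl
  rw [hin]
  have hy := hbelow (x - P x) (F.sub_starProjection_mem_orthogonal x)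
  have hx1 : ‖x‖ ≤ ‖P x‖ + ‖x - P x‖ := by
    simpa using norm_add_le (P x) (x - P x)
  have hx2 : ‖e (x - P x)‖ ≤ ‖e x‖ + N * ‖P x‖ := by
    rw [map_sub]
    exact (norm_sub_le _ _).trans (by gcongr; exact e.le_opNorm _)
  have hx3 : ε * ‖x‖ ≤ ‖e x‖ + (ε + N) * ‖P x‖ := by nlinarith
  have hx4 : (ε * ‖x‖) ^ 2 ≤ (‖e x‖ + (ε + N) * ‖P x‖) ^ 2 := by gcongr
  rw [div_mul_eq_mul_div, div_le_iff₀ hDpos]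
  nlinarith [sq_nonneg ((ε + N) * ‖e x‖ - ‖P x‖)]

theorem exists_orthonormal_summable {H : Type*} [NormedAddCommGroup H]
    [InnerProductSpace ℂ H] [CompleteSpace H] {A : Set (H →L[ℂ] H)}
    (hA : IsClosedStarSubalgebraOfOperators A)
    (hKA : ∀ T : H →L[ℂ] H, IsCompactOperator T → T ∈ A)
    (h1 : ContinuousLinearMap.id ℂ H ∉ A) {e : H →L[ℂ] H} (he : e ∈ A) (hpos : e.IsPositive) :
    ∃ f : ℕ → H, Orthonormal ℂ f ∧ Summable fun n => ‖e (f n)‖ := by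
  classical
  -- Each vector is paired with the exponent that bounds its image under `e`.
  obtain ⟨g, hg1, hg2⟩ := exists_seq_of_forall_finset_exists
    (fun p : ℕ × H => ‖p.2‖ = 1 ∧ ‖e p.2‖ ≤ (1 / 2 : ℝ) ^ p.1)
    (fun p p' => p.1 < p'.1 ∧ inner ℂ p.2 p'.2 = 0) (by
      intro s _
      have : FiniteDimensional ℂ (Submodule.span ℂ (s.image Prod.snd : Set H)) :=
        FiniteDimensional.span_finset ℂ _
      obtain ⟨f, hf1, hf2, hf3⟩ := exists_unit_orthogonal_small hA hKA h1 he hpos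
        (Submodule.span ℂ (s.image Prod.snd : Set H))
        (ε := (1 / 2 : ℝ) ^ (s.sup Prod.fst + 1)) (by positivity)
      refine ⟨(s.sup Prod.fst + 1, f), ⟨hf1, hf2⟩, fun p hp => ⟨?_, ?_⟩⟩
      · exact Nat.lt_succ_of_le (Finset.le_sup (f := Prod.fst) hp)
      · exact (Submodule.mem_orthogonal _ _).1 hf3 _
          (Submodule.subset_span (by simpa using ⟨p.1, hp⟩)))
  have hmono : StrictMono fun n => (g n).1 := fun m n hmn => (hg2 m n hmn).1
  refine ⟨fun n => (g n).2, ⟨fun n => (hg1 n).1, fun m n hmn => ?_⟩, ?_⟩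
  · rcases lt_or_gt_of_ne hmn with h | h
    · exact (hg2 m n h).2
    · exact inner_eq_zero_symm.1 (hg2 n m h).2
  · refine Summable.of_nonneg_of_le (fun _ => norm_nonneg _) (fun n => ?_)
      (summable_geometric_of_lt_one (r := (1 / 2 : ℝ)) (by norm_num) (by norm_num))
    exact (hg1 n).2.trans (pow_le_pow_of_le_one (by norm_num) (by norm_num) (hmono.id_le n))

theorem Orthonormal.countable_index {H ι : Type*} [NormedAddCommGroup H]
    [InnerProductSpace ℂ H] [TopologicalSpace.SeparableSpace H] {v : ι → H}
    (hv : Orthonormal ℂ v) : Countable ι := by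
  -- Distinct members of the family are at distance `√2`, so balls of radius `1 / 2` are disjoint.
  refine Pairwise.countable_of_isOpen_disjoint (s := fun i => Metric.ball (v i) (1 / 2)) ?_
    (fun _ => Metric.isOpen_ball) (fun i => ⟨v i, Metric.mem_ball_self (by norm_num)⟩)
  intro i j hij
  refine Metric.ball_disjoint_ball ?_
  have h : ‖v i - v j‖ ^ 2 = 2 := by
    rw [@norm_sub_sq ℂ, hv.2 hij, hv.1 i, hv.1 j]; norm_num
  rw [dist_eq_norm]
  nlinarith [norm_nonneg (v i - v j)]

theorem exists_isometry_compact {H₁ H₂ : Type*} [NormedAddCommGroup H₁] [InnerProductSpace ℂ H₁]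
    [CompleteSpace H₁] [NormedAddCommGroup H₂] [InnerProductSpace ℂ H₂] [CompleteSpace H₂]
    [TopologicalSpace.SeparableSpace H₂] (e : H₁ →L[ℂ] H₁) {f : ℕ → H₁} (hf : Orthonormal ℂ f)
    (hsum : Summable fun n => ‖e (f n)‖) :
    ∃ T : H₂ →L[ℂ] H₁, (∀ x, ‖T x‖ = ‖x‖) ∧ IsCompactOperator (e.comp T) := by
  obtain ⟨w, b, -⟩ := exists_hilbertBasis ℂ H₂
  have : Countable w := b.orthonormal.countable_index
  obtain ⟨k, hk⟩ := exists_injective_nat w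
  have hfk : Orthonormal ℂ (f ∘ k) := hf.comp k hk
  set V := hfk.orthogonalFamily.linearIsometry.comp b.repr.toLinearIsometry with hV
  refine ⟨V.toContinuousLinearMap, fun x => V.norm_map x, ?_⟩
  have hs : Summable fun i : w => InnerProductSpace.rankOne ℂ (e (f (k i))) (b i) := by
    refine Summable.of_norm ?_
    simpa [b.orthonormal.1, Function.comp_def] using hsum.comp_injective hk
  have hEq : e.comp V.toContinuousLinearMap =
      ∑' i : w, InnerProductSpace.rankOne ℂ (e (f (k i))) (b i) := by
    ext x
    have h1 : HasSum (fun i : w => e (b.repr x i • f (k i))) (e (V x)) :=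
      e.hasSum (hfk.orthogonalFamily.hasSum_linearIsometry (b.repr x))
    have h2 := (ContinuousLinearMap.apply ℂ H₁ x).hasSum hs.hasSum
    refine h1.unique ?_
    have h3 : (fun i : w => e (b.repr x i • f (k i))) =
        fun i : w => InnerProductSpace.rankOne ℂ (e (f (k i))) (b i) x := by
      funext i
      simp [b.repr_apply_apply]
    rw [h3]
    exact h2
  rw [hEq]
  refine isCompactOperator_of_tendsto hs.hasSum (Eventually.of_forall fun s => ?_)
  refine Submodule.sum_mem (compactOperator (RingHom.id ℂ) H₂ H₁) fun i _ => ?_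
  have hc : IsCompactOperator (innerSL ℂ (b i)) := isCompactOperator_of_locallyCompactSpace_dom _
  exact hc.clm_comp (ContinuousLinearMap.toSpanSingleton ℂ (e (f (k i))))

/-- Taking adjoints in the density of `e ∘ A` shows that `A` lies in the closure of `B(H) ∘ e`. -/
theorem exists_right_approx {H : Type*} [NormedAddCommGroup H]
    [InnerProductSpace ℂ H] [CompleteSpace H] {A : Set (H →L[ℂ] H)}
    (hA : IsClosedStarSubalgebraOfOperators A) {e : H →L[ℂ] H} (hpos : e.IsPositive)
    (hd : A ⊆ closure {x : H →L[ℂ] H | ∃ a ∈ A, x = e.comp a}) {a : H →L[ℂ] H} (ha : a ∈ A) :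
    a ∈ closure {x : H →L[ℂ] H | ∃ a' : H →L[ℂ] H, x = a'.comp e} := by
  have h := map_mem_closure (ContinuousLinearMap.adjoint (𝕜 := ℂ) (E := H) (F := H)).continuous
    (hd (hA.star_mem a ha)) (t := {x : H →L[ℂ] H | ∃ a' : H →L[ℂ] H, x = a'.comp e}) (by
      rintro x ⟨a', -, rfl⟩
      refine ⟨ContinuousLinearMap.adjoint a', ?_⟩
      rw [ContinuousLinearMap.adjoint_comp, hpos.isSelfAdjoint.adjoint_eq])
  simpa using h

/-- With `LM(X) = {T : T ∘ b compact ∀ b ∈ B}` and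
`RM(X) = {T : a ∘ T compact ∀ a ∈ A}`, one has `RM(X) ⊆ LM(X)` iff `1 ∈ A` or
`B = K(H₂)`. -/
theorem RM_subset_LM_iff
    {H₁ H₂ : Type*} [NormedAddCommGroup H₁] [InnerProductSpace ℂ H₁] [CompleteSpace H₁]
    [NormedAddCommGroup H₂] [InnerProductSpace ℂ H₂] [CompleteSpace H₂]
    [TopologicalSpace.SeparableSpace H₁] [TopologicalSpace.SeparableSpace H₂]
    (hH₁ : ¬ FiniteDimensional ℂ H₁) (hH₂ : ¬ FiniteDimensional ℂ H₂)
    {A : Set (H₁ →L[ℂ] H₁)} {B : Set (H₂ →L[ℂ] H₂)}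
    (hA : IsClosedStarSubalgebraOfOperators A) (hB : IsClosedStarSubalgebraOfOperators B)
    (hKA : ∀ T : H₁ →L[ℂ] H₁, IsCompactOperator T → T ∈ A)
    (hKB : ∀ T : H₂ →L[ℂ] H₂, IsCompactOperator T → T ∈ B)
    (hAσ : IsSigmaUnitalOperatorAlgebra A) (hBσ : IsSigmaUnitalOperatorAlgebra B) :
    {T : H₂ →L[ℂ] H₁ | ∀ a ∈ A, IsCompactOperator (a.comp T)} ⊆
        {T : H₂ →L[ℂ] H₁ | ∀ b ∈ B, IsCompactOperator (T.comp b)} ↔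
      (ContinuousLinearMap.id ℂ H₁ ∈ A ∨
        B = {T : H₂ →L[ℂ] H₂ | IsCompactOperator T}) := by
  constructor
  · intro hsub
    by_cases h1 : ContinuousLinearMap.id ℂ H₁ ∈ A
    · exact Or.inl h1
    right
    obtain ⟨e, he, hpos, hd⟩ := hAσ
    obtain ⟨f, hf, hsum⟩ := exists_orthonormal_summable hA hKA h1 he hpos
    obtain ⟨T, hT, hTc⟩ := exists_isometry_compact (H₂ := H₂) e hf hsum
    have hTR : ∀ a ∈ A, IsCompactOperator (a.comp T) := by
      intro a ha
      have hcl : IsClosed {S : H₂ →L[ℂ] H₁ | IsCompactOperator S} :=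
        isClosed_setOfPred_isCompactOperator
      have hcont : Continuous fun a : H₁ →L[ℂ] H₁ => a.comp T := by fun_prop
      refine closure_minimal ?_ (hcl.preimage hcont) (exists_right_approx hA hpos hd ha)
      rintro x ⟨a', rfl⟩
      exact hTc.clm_comp a'
    refine Set.Subset.antisymm (fun b hb => ?_) hKB
    have hTb : IsCompactOperator (T.comp b) := hsub hTR b hb
    have hb' := hTb.clm_comp (ContinuousLinearMap.adjoint T)
    have hTT := (ContinuousLinearMap.norm_map_iff_adjoint_comp_self T).1 hT
    have hbE : (ContinuousLinearMap.adjoint T) ∘ (T.comp b) = b := by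
      funext x
      exact DFunLike.congr_fun hTT (b x)
    rw [hbE] at hb'
    exact hb'
  · rintro (h1 | rfl) T hT b hb
    · have hTc : IsCompactOperator T := hT _ h1
      exact hTc.comp_clm b
    · exact IsCompactOperator.clm_comp hb T
end
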